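/- Let r ≥ 1, let w be an irreducible continuous unitary representation of SU(2) on an (r+1)-dimensional complex Hilbert space H_w, and let β_r = Ad∘w be the (ergodic) adjoint action k ↦ w(k)(·)w(k)* of SU(2) on F = L(H_w) ≅ Mat_{r+1}(ℂ). Let v be any irreducible continuous unitary representation of SU(2) on a 3-dimensional complex Hilbert space. Then there exists no unital *-homomorphism η : F → L(H_v)⊗F satisfying η(β_{r,k}(f)) = (Ad v(k)⊗β_{r,k})(η(f)) for all k and η(f)Z_v = Z_v(1⊗f) for all f ∈ F; that is, the module representation v⊗β_r admits no structure of a full Hilbert bimodule representation of SU(2), and X_v admits no proper extension to a full bimodule representation. -/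

import Mathlib

section

/-- The compact group `SU(2)`, as the special unitary matrices in `M₂(ℂ)`. -/
abbrev SU2 : Type := ↥(Matrix.specialUnitaryGroup (Fin 2) ℂ)

variable {F : Type} [Ring F] [StarRing F] [Algebra ℂ F]
variable (β : SU2 → F ≃⋆ₐ[ℂ] F)

/-- A continuous unitary matrix representation of `SU(2)` on `Fin n`. -/
def RepData {n : ℕ} (w : SU2 → Fin n → Fin n → ℂ) : Prop :=
  (∀ i j, w 1 i j = if i = j then (1 : ℂ) else 0) ∧
  (∀ (k k' : SU2) (i j : Fin n), w (k * k') i j = ∑ l, w k i l * w k' l j) ∧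
  (∀ (k : SU2) (i j : Fin n), (∑ l, w k i l * star (w k j l)) = if i = j then (1 : ℂ) else 0) ∧
  (∀ (k : SU2) (i j : Fin n), (∑ l, star (w k l i) * w k l j) = if i = j then (1 : ℂ) else 0) ∧
  (∀ i j, Continuous fun k => w k i j)

/-- Irreducibility: trivial commutant. -/
def IsIrr {n : ℕ} (w : SU2 → Fin n → Fin n → ℂ) : Prop :=
  ∀ A : Fin n → Fin n → ℂ,
    (∀ (k : SU2) (i j : Fin n), (∑ l, A i l * w k l j) = ∑ l, w k i l * A l j) →
    ∃ c : ℂ, ∀ i j, A i j = if i = j then c else 0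

/-- A pair `(E, η)` defining a full Hilbert bimodule `SU(2)`-representation on the
intermediate submodule `X_v ⊆ E (Hv ⊗ F) ⊆ Hv ⊗ F`: an invariant projection `E ≥ E_v`
together with a unital *-homomorphism `η` into the corner satisfying the two displayed
conditions `η (β_k f) = (Ad v(k) ⊗ β_k)(η f)` and `η(f) Z_v = Z_v (1 ⊗ f)`. -/
def IsFullStructure {n : ℕ} (v : SU2 → Fin n → Fin n → ℂ)
    (E : Fin n → Fin n → F) (η : F → Fin n → Fin n → F) : Prop :=
  (∀ i j, (∑ l, E i l * E l j) = E i j) ∧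
  (∀ i j, star (E j i) = E i j) ∧
  (∀ (k : SU2) (i j : Fin n), E i j = ∑ p, ∑ q, (v k i p * star (v k j q)) • β k (E p q)) ∧
  (∀ c : Fin n → F, (∀ (k : SU2) (j : Fin n), β k (c j) = ∑ i, v k i j • c i) →
    ∀ i, (∑ j, E i j * star (c j)) = star (c i)) ∧
  (∀ i j, η 1 i j = E i j) ∧
  (∀ (f f' : F) (i j : Fin n), (∑ l, η f i l * η f' l j) = η (f * f') i j) ∧
  (∀ (f : F) (i j : Fin n), star (η f j i) = η (star f) i j) ∧
  (∀ (c : ℂ) (f f' : F) (i j : Fin n), η (c • f + f') i j = c • η f i j + η f' i j) ∧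
  (∀ (k : SU2) (f : F) (i j : Fin n),
    η (β k f) i j = ∑ p, ∑ q, (v k i p * star (v k j q)) • β k (η f p q)) ∧
  (∀ (f : F) (c : Fin n → F), (∀ (k : SU2) (j : Fin n), β k (c j) = ∑ i, v k i j • c i) →
    ∀ i, (∑ j, η f i j * star (c j)) = star (c i) * f)

/-!
Pull `v` and `w` back to `ℍˣ` along the double cover and let `U = v ⊗ w`. For a full structure `η`
the operators `η (w g)⁻¹ U g` commute with the range of `η`, so they form a representation on the
range of `η p` for a minimal projection `p`, a space of dimension at most three. The maps in `L_v`
give an intertwiner from `w` to `U` on which these operators act trivially; it is nonzero because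
`v` is equivalent to the adjoint representation and `w` has a nonzero differential.
A representation of dimension at most three in which `-1` acts trivially is either trivial or
restricts on `i` and `j` to the three nontrivial characters of the Klein four-group, since `i`, `j`
and `i j` are conjugate; the fixed vectors exclude the second case. Hence `U g * η 1 = η (w g)`: the
range of `η 1` is a multiple of `w`, and therefore spanned by the images of intertwiners, that is,
contained in `X_v`. If `η 1 = 1`, then `χ_v χ_w = 3 χ_w`, so `v` would be trivial.
-/

namespace SU2Rep

open NormedSpace Filter Topology Quaternion
open scoped Matrix Quaternion Kronecker

section OneParameter

variable {𝔸 : Type*} [NormedRing 𝔸] [NormedAlgebra ℝ 𝔸] [CompleteSpace 𝔸]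

open intervalIntegral in
lemma exists_isUnit_integral {f : ℝ → 𝔸} (hf : Continuous f) (h0 : f 0 = 1) :
    ∃ δ, IsUnit (∫ s in (0 : ℝ)..δ, f s) := by
  have hslope := (integral_hasDerivAt_right (hf.intervalIntegrable 0 0)
    (hf.stronglyMeasurableAtFilter _ _) hf.continuousAt).tendsto_slope_zero
  simp only [h0, zero_add, integral_same, sub_zero] at hslope
  obtain ⟨δ, hunit, hδ⟩ := ((hslope.eventually (Units.isOpen.mem_nhds isUnit_one)).and
    self_mem_nhdsWithin).exists
  exact ⟨δ, (isUnit_smul_iff (Units.mk0 δ⁻¹ (inv_ne_zero hδ)) _).1 hunit⟩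

open intervalIntegral in
lemma exists_hasDerivAt_zero {f : ℝ → 𝔸} (hf : Continuous f) (h0 : f 0 = 1)
    (hadd : ∀ s t, f (s + t) = f s * f t) : ∃ A, HasDerivAt f A 0 := by
  have hint a b : IntervalIntegrable f MeasureTheory.volume a b := hf.intervalIntegrable a b
  have hderiv t : HasDerivAt (fun u => ∫ s in (0 : ℝ)..u, f s) (f t) t :=
    integral_hasDerivAt_right (hint _ _) (hf.stronglyMeasurableAtFilter _ _) hf.continuousAt
  obtain ⟨δ, u, hu⟩ := exists_isUnit_integral hf h0
  have key t : f t = ((∫ s in (0 : ℝ)..t + δ, f s) - ∫ s in (0 : ℝ)..t, f s) * ↑u⁻¹ := by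
    rw [Units.eq_mul_inv_iff_mul_eq, hu, integral_interval_sub_left (hint _ _) (hint _ _)]
    calc f t * ∫ s in (0 : ℝ)..δ, f s = ∫ s in (0 : ℝ)..δ, f (t + s) := by
          simp only [hadd]
          exact ((ContinuousLinearMap.mul ℝ 𝔸 (f t)).intervalIntegral_comp_comm (hint 0 δ)).symm
      _ = ∫ s in t..t + δ, f s := by rw [integral_comp_add_left, add_zero]
  have hderiv₀ := (((hderiv (0 + δ)).comp_add_const 0 δ).sub (hderiv 0)).mul_const ↑u⁻¹
  exact ⟨_, hderiv₀.congr_of_eventuallyEq (.of_forall key)⟩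

lemma eq_exp_smul_mul_of_hasDerivAt {y : ℝ → 𝔸} {A : 𝔸} (hy : ∀ t, HasDerivAt y (A * y t) t)
    (t : ℝ) : y t = exp (t • A) * y 0 := by
  let : NormedAlgebra ℚ 𝔸 := .restrictScalars ℚ ℝ 𝔸
  have hconst s : HasDerivAt (fun t => exp (t • -A) * y t) 0 s :=
    ((hasDerivAt_exp_smul_const (-A) s).mul (hy s)).congr_deriv (by noncomm_ring)
  have h : exp (-(t • A)) * y t = y 0 := by
    simpa using is_const_of_deriv_eq_zero (fun s => (hconst s).differentiableAt)
      (fun s => (hconst s).deriv) t 0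
  rw [← h, ← mul_assoc, ← exp_add_of_commute (Commute.neg_right rfl), add_neg_cancel, exp_zero,
    one_mul]

lemma exists_eq_exp_smul {f : ℝ → 𝔸} (hf : Continuous f) (h0 : f 0 = 1)
    (hadd : ∀ s t, f (s + t) = f s * f t) : ∃ A, ∀ t, f t = exp (t • A) := by
  obtain ⟨A, hA⟩ := exists_hasDerivAt_zero hf h0 hadd
  refine ⟨A, fun t => ?_⟩
  have hderiv s : HasDerivAt f (A * f s) s := by
    have h := ((by simpa using hA : HasDerivAt f A (s + -s)).comp_add_const s (-s)).mul_const (f s)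
    simpa [← hadd] using h
  rw [eq_exp_smul_mul_of_hasDerivAt hderiv t, h0, mul_one]

-- Near `0` the curve is the exponential of its logarithm, where `log` is a local inverse of `exp`.
lemma tendsto_inv_pow {f : ℝ → 𝔸} {A : 𝔸} (h0 : f 0 = 1) (hf : HasDerivAt f A 0) :
    Tendsto (fun n : ℕ => f (n : ℝ)⁻¹ ^ n) atTop (𝓝 (exp A)) := by
  let : NormedAlgebra ℚ 𝔸 := .restrictScalars ℚ ℝ 𝔸
  have hexp : HasStrictFDerivAt exp ((ContinuousLinearEquiv.refl ℝ 𝔸 : 𝔸 ≃L[ℝ] 𝔸) : 𝔸 →L[ℝ] 𝔸)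
      (0 : 𝔸) := hasStrictFDerivAt_exp_zero
  set log := hexp.localInverse exp _ 0
  have hlog0 : log (f 0) = 0 := by simpa [h0] using hexp.localInverse_apply_image
  have hinv : ∀ᶠ t in 𝓝 (0 : ℝ), exp (log (f t)) = f t := by
    have := hexp.eventually_right_inverse
    rw [exp_zero, ← h0] at this
    exact hf.continuousAt.eventually this
  have hlog : HasDerivAt (fun t => log (f t)) A 0 := by
    have := hexp.to_localInverse.hasFDerivAt
    rw [exp_zero, ← h0] at this
    exact this.comp_hasDerivAt 0 hf
  have hseq : Tendsto (fun n : ℕ => (n : ℝ)⁻¹) atTop (𝓝[≠] 0) :=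
    tendsto_nhdsWithin_iff.2 ⟨tendsto_inv_atTop_nhds_zero_nat,
      (eventually_gt_atTop 0).mono fun n hn => by simpa using hn.ne'⟩
  have hlim : Tendsto (fun n : ℕ => n • log (f (n : ℝ)⁻¹)) atTop (𝓝 A) := by
    simpa [Function.comp_def, hlog0, ← Nat.cast_smul_eq_nsmul ℝ] using
      hlog.tendsto_slope_zero.comp hseq
  refine ((exp_continuous.tendsto A).comp hlim).congr' ?_
  filter_upwards [(hseq.mono_right nhdsWithin_le_nhds).eventually hinv] with n hn
  rw [Function.comp_apply, exp_nsmul, hn]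

lemma exp_smul_injective {A B : 𝔸} (h : ∀ t : ℝ, exp (t • A) = exp (t • B)) : A = B := by
  have hA := hasDerivAt_exp_smul_const A (0 : ℝ)
  simp only [h] at hA
  simpa using hA.unique (hasDerivAt_exp_smul_const B (0 : ℝ))

end OneParameter

section Units

variable {𝔸 𝔹 : Type*} [NormedRing 𝔸] [NormedAlgebra ℝ 𝔸] [CompleteSpace 𝔸]
  [NormedRing 𝔹] [NormedAlgebra ℝ 𝔹] [CompleteSpace 𝔹]

/-- The exponential of a Banach algebra, as a map into its group of units. -/
noncomputable def expUnit (X : 𝔹) : 𝔹ˣ where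
  val := exp X
  inv := exp (-X)
  val_inv := by
    let : NormedAlgebra ℚ 𝔹 := .restrictScalars ℚ ℝ 𝔹
    rw [← exp_add_of_commute (Commute.neg_right rfl), add_neg_cancel, exp_zero]
  inv_val := by
    let : NormedAlgebra ℚ 𝔹 := .restrictScalars ℚ ℝ 𝔹
    rw [← exp_add_of_commute (Commute.neg_left rfl), neg_add_cancel, exp_zero]

lemma continuous_expUnit : Continuous (expUnit : 𝔹 → 𝔹ˣ) := by
  let : NormedAlgebra ℚ 𝔹 := .restrictScalars ℚ ℝ 𝔹
  exact Units.continuous_iff.2 ⟨exp_continuous, exp_continuous.comp continuous_neg⟩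

lemma expUnit_zero : expUnit (0 : 𝔹) = 1 := Units.ext exp_zero

lemma expUnit_add_smul (s t : ℝ) (X : 𝔹) :
    expUnit ((s + t) • X) = expUnit (s • X) * expUnit (t • X) := by
  let : NormedAlgebra ℚ 𝔹 := .restrictScalars ℚ ℝ 𝔹
  ext
  simp only [expUnit, Units.val_mul, add_smul]
  exact exp_add_of_commute (((Commute.refl X).smul_left s).smul_right t)

lemma expUnit_neg (X : 𝔹) : expUnit (-X) = (expUnit X)⁻¹ := Units.ext rfl

lemma expUnit_conj (g : 𝔹ˣ) (X : 𝔹) : expUnit (g * X * ↑g⁻¹) = g * expUnit X * g⁻¹ := by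
  let : NormedAlgebra ℚ 𝔹 := .restrictScalars ℚ ℝ 𝔹
  exact Units.ext (exp_units_conj g X)

lemma tendsto_exp_mul_exp_pow (X Y : 𝔹) :
    Tendsto (fun n : ℕ => (exp ((n : ℝ)⁻¹ • X) * exp ((n : ℝ)⁻¹ • Y)) ^ n) atTop
      (𝓝 (exp (X + Y))) := by
  have h : HasDerivAt (fun t : ℝ => exp (t • X) * exp (t • Y)) (X + Y) 0 :=
    ((hasDerivAt_exp_smul_const X (0 : ℝ)).mul (hasDerivAt_exp_smul_const Y (0 : ℝ))).congr_deriv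
      (by simp)
  exact tendsto_inv_pow (by simp) h

lemma tendsto_expUnit_mul_expUnit_pow (X Y : 𝔹) :
    Tendsto (fun n : ℕ => (expUnit ((n : ℝ)⁻¹ • X) * expUnit ((n : ℝ)⁻¹ • Y)) ^ n) atTop
      (𝓝 (expUnit (X + Y))) := by
  rw [Units.isOpenEmbedding_val.isInducing.tendsto_nhds_iff]
  exact tendsto_exp_mul_exp_pow X Y

variable (ρ : 𝔹ˣ →ₜ* 𝔸)

lemma exists_expUnit_smul_eq (X : 𝔹) : ∃ A, ∀ t : ℝ, ρ (expUnit (t • X)) = exp (t • A) :=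
  exists_eq_exp_smul (ρ.continuous_toFun.comp (continuous_expUnit.comp (by fun_prop)))
    (by simp [expUnit_zero]) fun s t => by rw [expUnit_add_smul, map_mul]

/-- The differential of `ρ` at `1`, so that `ρ (expUnit X) = exp (differential ρ X)`. -/
noncomputable def differential : 𝔹 →ₗ[ℝ] 𝔸 where
  toFun X := (exists_expUnit_smul_eq ρ X).choose
  map_add' X Y := by
    refine exp_smul_injective fun t => ?_
    rw [← (exists_expUnit_smul_eq ρ (X + Y)).choose_spec, smul_add, smul_add]
    refine tendsto_nhds_unique ((ρ.continuous_toFun.tendsto _).comp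
      (tendsto_expUnit_mul_expUnit_pow (t • X) (t • Y))) ?_
    refine (tendsto_exp_mul_exp_pow _ _).congr fun n => ?_
    rw [Function.comp_apply, smul_smul, smul_smul, smul_smul, smul_smul]
    simp only [← (exists_expUnit_smul_eq ρ _).choose_spec]
    exact (by simp : ρ _ = _).symm
  map_smul' c X := by
    refine exp_smul_injective fun t => ?_
    rw [← (exists_expUnit_smul_eq ρ (c • X)).choose_spec, RingHom.id_apply, smul_smul, smul_smul,
      ← (exists_expUnit_smul_eq ρ X).choose_spec]

lemma apply_expUnit_smul (t : ℝ) (X : 𝔹) : ρ (expUnit (t • X)) = exp (t • differential ρ X) :=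
  (exists_expUnit_smul_eq ρ X).choose_spec t

lemma apply_expUnit (X : 𝔹) : ρ (expUnit X) = exp (differential ρ X) := by
  simpa using apply_expUnit_smul ρ 1 X

lemma differential_unique {X : 𝔹} {A : 𝔸} (h : ∀ t : ℝ, ρ (expUnit (t • X)) = exp (t • A)) :
    differential ρ X = A :=
  exp_smul_injective fun t => by rw [← apply_expUnit_smul, h]

lemma differential_conj (g : 𝔹ˣ) (X : 𝔹) :
    differential ρ (g * X * ↑g⁻¹) = ρ g * differential ρ X * ρ g⁻¹ := by
  let : NormedAlgebra ℚ 𝔸 := .restrictScalars ℚ ℝ 𝔸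
  let u : 𝔸ˣ := Units.map (ρ : 𝔹ˣ →* 𝔸) (toUnits g)
  refine differential_unique ρ fun t => ?_
  have hX : t • (g * X * ↑g⁻¹ : 𝔹) = g * (t • X) * ↑g⁻¹ := by simp
  have hA : t • (ρ g * differential ρ X * ρ g⁻¹) = u * (t • differential ρ X) * ↑u⁻¹ := by
    simp [u]
  rw [hX, hA, expUnit_conj, map_mul, map_mul, apply_expUnit_smul, exp_units_conj]
  rfl

lemma hasDerivAt_exp_smul_conj (X Y : 𝔹) (t : ℝ) :
    HasDerivAt (fun t : ℝ => exp (t • X) * Y * exp (t • -X))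
      ⁅X, exp (t • X) * Y * exp (t • -X)⁆ t := by
  refine (((hasDerivAt_exp_smul_const' X t).mul_const Y).mul
    (hasDerivAt_exp_smul_const (-X) t)).congr_deriv ?_
  rw [Ring.lie_def]
  noncomm_ring

variable [FiniteDimensional ℝ 𝔹]

lemma map_expUnit_conj {P : 𝔹 →ₗ[ℝ] 𝔸} {X : 𝔹} {A : 𝔸} (h : ∀ Y, P ⁅X, Y⁆ = A * P Y) (Y : 𝔹) :
    P (expUnit X * Y * ↑(expUnit X)⁻¹) = exp A * P Y := by
  have hderiv t := (P.toContinuousLinearMap.hasFDerivAt.comp_hasDerivAt t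
    (hasDerivAt_exp_smul_conj X Y t)).congr_deriv (h _)
  simpa [expUnit] using eq_exp_smul_mul_of_hasDerivAt hderiv 1

lemma differential_lie (X Y : 𝔹) :
    differential ρ ⁅X, Y⁆ = ⁅differential ρ X, differential ρ Y⁆ := by
  have hderiv := (differential ρ).toContinuousLinearMap.hasFDerivAt.comp_hasDerivAt 0
    (hasDerivAt_exp_smul_conj X Y 0)
  have hconj := hasDerivAt_exp_smul_conj (differential ρ X) (differential ρ Y) 0
  have key (t : ℝ) : differential ρ (exp (t • X) * Y * exp (t • -X)) =
      exp (t • differential ρ X) * differential ρ Y * exp (t • -differential ρ X) := by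
    rw [← map_neg, ← apply_expUnit_smul, ← apply_expUnit_smul, smul_neg, expUnit_neg,
      ← differential_conj, ← expUnit_neg]
    rfl
  simp only [Function.comp_def, key, zero_smul, exp_zero, one_mul, mul_one,
    LinearMap.coe_toContinuousLinearMap'] at hderiv hconj
  exact hderiv.unique hconj

end Units

/-- The quaternion `i`. -/
@[simps] def qI : ℍ := ⟨0, 1, 0, 0⟩

/-- The quaternion `j`. -/
@[simps] def qJ : ℍ := ⟨0, 0, 1, 0⟩

/-- The quaternion `k`. -/
@[simps] def qK : ℍ := ⟨0, 0, 0, 1⟩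

/-- The quaternion `1 + i + j + k`; conjugation by it permutes `i`, `j`, `k` cyclically. -/
@[simps] def qC : ℍ := ⟨1, 1, 1, 1⟩

/-- `qI` as a unit. -/
def unitI : ℍˣ := ⟨qI, -qI, by ext <;> simp, by ext <;> simp⟩

/-- `qJ` as a unit. -/
def unitJ : ℍˣ := ⟨qJ, -qJ, by ext <;> simp, by ext <;> simp⟩

/-- `qC` as a unit. -/
noncomputable def unitC : ℍˣ := Units.mk0 qC fun h => by
  simpa using congrArg QuaternionAlgebra.re h

@[simp] lemma val_unitI : (unitI : ℍ) = qI := rfl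

@[simp] lemma val_unitJ : (unitJ : ℍ) = qJ := rfl

@[simp] lemma val_unitC : (unitC : ℍ) = qC := rfl

lemma unitI_mul_unitI : unitI * unitI = -1 := by ext <;> simp

lemma unitJ_mul_unitJ : unitJ * unitJ = -1 := by ext <;> simp

lemma unitJ_mul_unitI : unitJ * unitI = -1 * (unitI * unitJ) := by ext <;> simp

lemma unitC_mul_unitI : unitC * unitI = unitJ * unitC := by ext <;> simp

lemma unitC_mul_unitJ : unitC * unitJ = unitI * unitJ * unitC := by ext <;> simp

lemma eq_add_smul (q : ℍ) : q = q.re • 1 + q.imI • qI + q.imJ • qJ + q.imK • qK := by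
  ext <;> simp

lemma norm_im_mul_self (q : ℍ) :
    ‖q.im‖ * ‖q.im‖ = q.imI * q.imI + q.imJ * q.imJ + q.imK * q.imK := by
  rw [← Quaternion.normSq_eq_norm_mul_self, Quaternion.normSq_def']
  simp [pow_two]

-- The intertwiner is `im q + ‖im q‖ i`, unless this vanishes.
lemma exists_mul_eq_mul_coeComplex (q : ℍ) :
    ∃ u : ℍ, u ≠ 0 ∧ q * u = u * ((⟨q.re, ‖q.im‖⟩ : ℂ) : ℍ) := by
  by_cases h : q.im + ((⟨0, ‖q.im‖⟩ : ℂ) : ℍ) = 0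
  · refine ⟨qJ, fun h => by simpa using congrArg QuaternionAlgebra.imJ h, ?_⟩
    have hI := congrArg QuaternionAlgebra.imI h
    have hJ := congrArg QuaternionAlgebra.imJ h
    have hK := congrArg QuaternionAlgebra.imK h
    simp at hI hJ hK
    ext <;> simp <;> grind
  · refine ⟨_, h, ?_⟩
    have hnorm := norm_im_mul_self q
    ext <;> simp <;> linarith

lemma exists_eq_conj_coeComplex (q : ℍ) :
    ∃ u : ℍˣ, q = u * ((⟨q.re, ‖q.im‖⟩ : ℂ) : ℍ) * ↑u⁻¹ := by
  obtain ⟨u, hu, hqu⟩ := exists_mul_eq_mul_coeComplex q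
  exact ⟨Units.mk0 u hu, (Units.eq_mul_inv_iff_mul_eq _).2 hqu⟩

lemma expUnit_surjective : Function.Surjective (expUnit : ℍ → ℍˣ) := by
  intro g
  obtain ⟨u, hu⟩ := exists_eq_conj_coeComplex g
  set z : ℂ := ⟨(g : ℍ).re, ‖(g : ℍ).im‖⟩
  have hz : z ≠ 0 := fun hz => g.ne_zero (by rw [hu, hz]; simp)
  have hexp : exp ((Complex.log z : ℂ) : ℍ) = z := by
    have h := map_exp Quaternion.ofComplex
      Quaternion.ofComplex.toLinearMap.continuous_of_finiteDimensional (Complex.log z)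
    rw [← Complex.exp_eq_exp_ℂ, Complex.exp_log hz] at h
    exact h.symm
  refine ⟨u * (Complex.log z : ℂ) * ↑u⁻¹, Units.ext ?_⟩
  rw [expUnit_conj, hu, ← hexp]
  rfl

/-- The inclusion of the center `ℝˣ` of `ℍˣ`. -/
noncomputable abbrev realUnit : ℝˣ →* ℍˣ := Units.map (algebraMap ℝ ℍ)

section Normal

variable {N : Subgroup ℍˣ} [N.Normal]

lemma mem_of_re_eq_zero (hreal : realUnit.range ≤ N) (hI : unitI ∈ N) {g : ℍˣ}
    (hg : (g : ℍ).re = 0) : g ∈ N := by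
  obtain ⟨u, hu⟩ := exists_eq_conj_coeComplex g
  have hnorm : ‖(g : ℍ).im‖ ≠ 0 := fun h => g.ne_zero (by
    rw [hu, hg, h, show (⟨0, 0⟩ : ℂ) = 0 from rfl]
    simp)
  have hconj : g = u * (realUnit (Units.mk0 _ hnorm) * unitI) * u⁻¹ := by
    refine Units.ext (hu.trans ?_)
    simp only [Units.val_mul]
    congr 2
    ext <;> simp [hg]
  rw [hconj]
  exact Subgroup.Normal.conj_mem inferInstance _
    (mul_mem (hreal (MonoidHom.mem_range.2 ⟨_, rfl⟩)) hI) u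

lemma eq_top_of_unitI_mem (hreal : realUnit.range ≤ N) (hI : unitI ∈ N) : N = ⊤ := by
  refine (Subgroup.eq_top_iff' N).2 fun g => ?_
  obtain ⟨u, hu⟩ := exists_eq_conj_coeComplex g
  set z : ℂ := ⟨(g : ℍ).re, ‖(g : ℍ).im‖⟩
  have hz : (z : ℍ) ≠ 0 := fun hz => g.ne_zero (by rw [hu, hz]; simp)
  have hfactor : g = u * (Units.mk0 _ hz * unitJ * unitJ⁻¹) * u⁻¹ := Units.ext (by simpa using hu)
  rw [hfactor]
  refine Subgroup.Normal.conj_mem inferInstance _ (mul_mem ?_ (inv_mem ?_)) u <;>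
    exact mem_of_re_eq_zero hreal hI (by simp)

end Normal

/-- The elements on which a multiplicative map into a semigroup takes the same value as at `1`. -/
def mulHomKer {G M : Type*} [Group G] [Semigroup M] (f : G →ₙ* M) : Subgroup G where
  carrier := {g | f g = f 1}
  mul_mem' {g h} hg hh := by
    rw [Set.mem_ofPred_eq, map_mul, hg, hh, ← map_mul, one_mul]
  one_mem' := rfl
  inv_mem' {g} hg := by
    rw [Set.mem_ofPred_eq, ← one_mul g⁻¹, map_mul, ← show f g = f 1 from hg, ← map_mul,
      mul_inv_cancel]
    exact hg.symm

instance {G M : Type*} [Group G] [Semigroup M] (f : G →ₙ* M) : (mulHomKer f).Normal where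
  conj_mem g hg h := by
    change f (h * g * h⁻¹) = f 1
    rw [map_mul, map_mul, hg, ← map_mul, ← map_mul, mul_one, mul_inv_cancel]

lemma apply_eq_apply_one {M : Type*} [Semigroup M] {f : ℍˣ →ₙ* M}
    (hreal : ∀ t, f (realUnit t) = f 1) (hI : f unitI = f 1) (g : ℍˣ) : f g = f 1 := by
  have htop : mulHomKer f = ⊤ := eq_top_of_unitI_mem (by rintro _ ⟨t, rfl⟩; exact hreal t) hI
  exact htop.ge (Subgroup.mem_top g)

section Idempotents

variable {K ι : Type*} [Field K] [Fintype ι] {q : Matrix ι ι K}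

lemma trace_eq_rank (hq : IsIdempotentElem q) : q.trace = q.rank := by
  classical
  have hq' : IsIdempotentElem (Matrix.toLin' q) := hq.map Matrix.toLinAlgEquiv'
  rw [← Matrix.trace_toLin'_eq, (LinearMap.IsIdempotentElem.isProj_range _ hq').trace]
  rfl

lemma eq_zero_of_rank_eq_zero (hq : q.rank = 0) : q = 0 := by
  classical
  exact Matrix.toLin'.map_eq_zero_iff.1 (LinearMap.range_eq_bot.1 (Submodule.finrank_eq_zero.1 hq))

lemma exists_mul_mul_eq_smul (hrank : q.rank = 1) (A : Matrix ι ι K) :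
    ∃ x : K, q * A * q = x • q := by
  classical
  obtain ⟨⟨_, u, rfl⟩, -, hspan⟩ := finrank_eq_one_iff'.1 hrank
  obtain ⟨x, hx⟩ := hspan ⟨q *ᵥ (A *ᵥ (q *ᵥ u)), _, rfl⟩
  refine ⟨x, Matrix.toLin'.injective (LinearMap.ext fun y => ?_)⟩
  obtain ⟨s, hs⟩ := hspan ⟨q *ᵥ y, y, rfl⟩
  replace hx : x • q *ᵥ u = q *ᵥ (A *ᵥ (q *ᵥ u)) := congrArg Subtype.val hx
  replace hs : s • q *ᵥ u = q *ᵥ y := congrArg Subtype.val hs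
  simp only [Matrix.toLin'_apply, ← Matrix.mulVec_mulVec, Matrix.smul_mulVec, ← hs,
    Matrix.mulVec_smul, ← hx]
  exact smul_comm _ _ _

end Idempotents

section KleinFour

variable {K : Type*} [Field K] [CharZero K]

lemma isIdempotentElem_half_smul_add {R : Type*} [Ring R] [Algebra K R] {e a : R}
    (he : e * e = e) (hae : a * e = a) (hea : e * a = a) (haa : a * a = e) :
    IsIdempotentElem ((2⁻¹ : K) • (e + a)) := by
  have h : (e + a) * (e + a) = (2 : K) • (e + a) := by
    rw [add_mul, mul_add, mul_add, he, hae, hea, haa, two_smul]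
    abel
  rw [IsIdempotentElem, smul_mul_smul_comm, h, smul_smul]
  norm_num

lemma isIdempotentElem_quarter_smul_add {R : Type*} [Ring R] [Algebra K R] {e a b : R}
    (he : e * e = e) (hae : a * e = a) (hea : e * a = a) (hbe : b * e = b) (heb : e * b = b)
    (haa : a * a = e) (hbb : b * b = e) (hba : b * a = a * b) :
    IsIdempotentElem ((4⁻¹ : K) • (e + a + b + a * b)) := by
  have hcomm : Commute ((2⁻¹ : K) • (e + a)) ((2⁻¹ : K) • (e + b)) := by
    refine (Commute.smul_left ?_ _).smul_right _
    simp only [Commute, SemiconjBy, add_mul, mul_add, he, hae, hea, hbe, heb, hba]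
    abel
  have hmul : (4⁻¹ : K) • (e + a + b + a * b) = (2⁻¹ : K) • (e + a) * (2⁻¹ : K) • (e + b) := by
    rw [smul_mul_smul_comm, add_mul, mul_add, mul_add, he, heb, hae]
    congr 1
    · norm_num
    · abel
  rw [hmul]
  exact (isIdempotentElem_half_smul_add he hae hea haa).mul_of_commute hcomm
    (isIdempotentElem_half_smul_add he hbe heb hbb)

variable {ι : Type*} [Fintype ι] {e a b : Matrix ι ι K}

-- The multiplicities of the trivial and of the three nontrivial characters of the Klein four-group.
lemma exists_multiplicities (he : e * e = e) (hae : a * e = a) (hea : e * a = a)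
    (hbe : b * e = b) (heb : e * b = b) (haa : a * a = e) (hbb : b * b = e) (hba : b * a = a * b)
    (htb : b.trace = a.trace) (htab : (a * b).trace = a.trace) :
    ∃ d₀ d₁ : ℕ, e.rank = d₀ + 3 * d₁ ∧ a.trace = d₀ - d₁ ∧
      (d₀ = 0 → e + a + b + a * b = 0) ∧ (d₁ = 0 → a = e) := by
  classical
  have hq₀ := isIdempotentElem_quarter_smul_add (K := K) he hae hea hbe heb haa hbb hba
  have hq₁ : IsIdempotentElem ((4⁻¹ : K) • (e + -a + b + -(a * b))) := by
    rw [← neg_mul]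
    exact isIdempotentElem_quarter_smul_add he (by simpa) (by simpa) hbe heb (by simpa) hbb
      (by simpa)
  have hq₂ : IsIdempotentElem ((4⁻¹ : K) • (e + -a + -b + a * b)) := by
    rw [← neg_mul_neg]
    exact isIdempotentElem_quarter_smul_add he (by simpa) (by simpa) (by simpa) (by simpa)
      (by simpa) (by simpa) (by simpa)
  have ht₀ := trace_eq_rank hq₀
  have ht₁ := trace_eq_rank hq₁
  have ht₂ := trace_eq_rank hq₂
  simp only [Matrix.trace_smul, Matrix.trace_add, Matrix.trace_neg, smul_eq_mul, htb,
    htab, trace_eq_rank he] at ht₀ ht₁ ht₂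
  refine ⟨((4⁻¹ : K) • (e + a + b + a * b)).rank, ((4⁻¹ : K) • (e + -a + b + -(a * b))).rank,
    Nat.cast_injective (R := K) ?_, ?_, fun h₀ => ?_, fun h₁ => ?_⟩
  · push_cast
    rw [← ht₀, ← ht₁]
    ring
  · rw [← ht₀, ← ht₁]
    ring
  · simpa only [smul_eq_zero, inv_eq_zero, OfNat.ofNat_ne_zero, false_or] using
      eq_zero_of_rank_eq_zero h₀
  · have h₂ : ((4⁻¹ : K) • (e + -a + -b + a * b)).rank = 0 := by
      rw [← Nat.cast_eq_zero (R := K), ← ht₂, ← Nat.cast_eq_zero.2 h₁, ← ht₁]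
      ring
    have hsub : (2⁻¹ : K) • (e - a) = 0 := by
      calc (2⁻¹ : K) • (e - a)
          = (4⁻¹ : K) • (e + -a + b + -(a * b)) + (4⁻¹ : K) • (e + -a + -b + a * b) := by
            module
        _ = 0 := by rw [eq_zero_of_rank_eq_zero h₁, eq_zero_of_rank_eq_zero h₂, add_zero]
    simpa [sub_eq_zero, eq_comm] using hsub

lemma eq_or_add_add_add_eq_zero (he : e * e = e) (hae : a * e = a) (hea : e * a = a)
    (hbe : b * e = b) (heb : e * b = b) (haa : a * a = e) (hbb : b * b = e) (hba : b * a = a * b)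
    (htb : b.trace = a.trace) (htab : (a * b).trace = a.trace) (hrank : e.rank ≤ 3) :
    a = e ∨ e + a + b + a * b = 0 ∧ a.trace = -1 := by
  obtain ⟨d₀, d₁, hd, htrace, hzero, heq⟩ :=
    exists_multiplicities he hae hea hbe heb haa hbb hba htb htab
  by_cases hd₁ : d₁ = 0
  · exact .inl (heq hd₁)
  · obtain ⟨rfl, rfl⟩ : d₀ = 0 ∧ d₁ = 1 := by omega
    exact .inr ⟨hzero rfl, by simpa using htrace⟩

end KleinFour

section KleinRestriction

variable {K ι : Type*} [Field K] [Fintype ι]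

lemma trace_conj (ρ : ℍˣ →ₙ* Matrix ι ι K) (g h : ℍˣ) :
    (ρ (g * h * g⁻¹)).trace = (ρ h).trace := by
  rw [map_mul, Matrix.trace_mul_comm, ← map_mul, inv_mul_cancel_left]

lemma unitI_eq_or_add_add_add_eq_zero [CharZero K] (ρ : ℍˣ →ₙ* Matrix ι ι K)
    (hneg : ρ (-1) = ρ 1) (hrank : (ρ 1).rank ≤ 3) :
    ρ unitI = ρ 1 ∨
      ρ 1 + ρ unitI + ρ unitJ + ρ unitI * ρ unitJ = 0 ∧ (ρ unitI).trace = -1 := by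
  have hI : unitC * unitI * unitC⁻¹ = unitJ := by rw [unitC_mul_unitI, mul_inv_cancel_right]
  have hJ : unitC * unitJ * unitC⁻¹ = unitI * unitJ := by
    rw [unitC_mul_unitJ, mul_inv_cancel_right]
  have htJ : (ρ unitJ).trace = (ρ unitI).trace := by rw [← hI, trace_conj]
  apply eq_or_add_add_add_eq_zero <;> try simp only [← map_mul, one_mul, mul_one]
  · rw [unitI_mul_unitI, hneg]
  · rw [unitJ_mul_unitJ, hneg]
  · rw [unitJ_mul_unitI, map_mul, hneg, ← map_mul, one_mul]
  · exact htJ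
  · rw [← hJ, trace_conj, htJ]
  · exact hrank

end KleinRestriction

/-- The quaternion `z + w * j` with `z w : ℂ` as the matrix `!![z, w; -conj w, conj z]`. -/
noncomputable def quaternionMatrix : ℍ →ₐ[ℝ] Matrix (Fin 2) (Fin 2) ℂ :=
  AlgHom.ofLinearMap
    { toFun q := !![⟨q.re, q.imI⟩, ⟨q.imJ, q.imK⟩; ⟨-q.imJ, q.imK⟩, ⟨q.re, -q.imI⟩]
      map_add' p q := by
        ext i j
        fin_cases i <;> fin_cases j <;> apply Complex.ext <;> simp [add_comm]
      map_smul' t q := by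
        ext i j
        fin_cases i <;> fin_cases j <;> apply Complex.ext <;> simp }
    (by
      ext i j
      fin_cases i <;> fin_cases j <;> apply Complex.ext <;> simp)
    (fun p q => by
      ext i j
      fin_cases i <;> fin_cases j <;> apply Complex.ext <;> simp <;> ring)

lemma quaternionMatrix_apply (q : ℍ) : quaternionMatrix q =
    !![⟨q.re, q.imI⟩, ⟨q.imJ, q.imK⟩; ⟨-q.imJ, q.imK⟩, ⟨q.re, -q.imI⟩] := rfl

lemma quaternionMatrix_star (q : ℍ) : quaternionMatrix (star q) = star (quaternionMatrix q) := by
  ext i j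
  fin_cases i <;> fin_cases j <;> apply Complex.ext <;> simp [quaternionMatrix_apply]

lemma det_quaternionMatrix (q : ℍ) : (quaternionMatrix q).det = (normSq q : ℝ) := by
  apply Complex.ext <;>
    simp [quaternionMatrix_apply, Matrix.det_fin_two, normSq_def', -Complex.ofReal_pow] <;> ring

lemma quaternionMatrix_mem_specialUnitaryGroup {q : ℍ} (hq : ‖q‖ = 1) :
    quaternionMatrix q ∈ Matrix.specialUnitaryGroup (Fin 2) ℂ := by
  have hnorm : normSq q = 1 := by rw [normSq_eq_norm_mul_self, hq, mul_one]
  rw [Matrix.mem_specialUnitaryGroup_iff, Matrix.mem_unitaryGroup_iff, ← quaternionMatrix_star,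
    ← map_mul, Quaternion.self_mul_star, det_quaternionMatrix, hnorm]
  simp

lemma exists_quaternionMatrix_eq (g : SU2) : ∃ q : ℍ, quaternionMatrix q = g := by
  obtain ⟨g, hg⟩ := g
  obtain ⟨hunit, hdet⟩ := Matrix.mem_specialUnitaryGroup_iff.1 hg
  have hstar : g.adjugate = star g :=
    left_inv_eq_right_inv (by rw [Matrix.adjugate_mul, hdet, one_smul])
      (Matrix.mem_unitaryGroup_iff.1 hunit)
  rw [Matrix.adjugate_fin_two] at hstar
  have h0 : g 1 1 = star (g 0 0) := congrFun₂ hstar 0 0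
  have h1 : -(g 1 0) = star (g 0 1) := congrFun₂ hstar 1 0
  rw [neg_eq_iff_eq_neg] at h1
  let q : ℍ := ⟨(g 0 0).re, (g 0 0).im, (g 0 1).re, (g 0 1).im⟩
  refine ⟨q, ?_⟩
  rw [quaternionMatrix_apply]
  ext i j
  fin_cases i <;> fin_cases j <;> apply Complex.ext <;> simp [q, h0, h1]

/-- The double cover of `SU(2)` by the unit quaternions, extended to all nonzero quaternions by
normalising. -/
noncomputable def toSU2 : ℍˣ →ₜ* SU2 where
  toFun q := ⟨quaternionMatrix (‖(q : ℍ)‖⁻¹ • (q : ℍ)),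
    quaternionMatrix_mem_specialUnitaryGroup (by simp [norm_smul])⟩
  map_one' := Subtype.ext (by simp)
  map_mul' p q := Subtype.ext (by simp [smul_smul, mul_comm])
  continuous_toFun :=
    (quaternionMatrix.toLinearMap.continuous_of_finiteDimensional.comp <|
      (Units.continuous_val.norm.inv₀ fun q => by simp).smul Units.continuous_val).subtype_mk _

lemma toSU2_surjective : Function.Surjective toSU2 := by
  intro g
  obtain ⟨q, hq⟩ := exists_quaternionMatrix_eq g
  have hnorm : ‖q‖ = 1 := by
    have h := det_quaternionMatrix q
    rw [hq, (Matrix.mem_specialUnitaryGroup_iff.1 g.2).2, normSq_eq_norm_mul_self] at h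
    have : ‖q‖ * ‖q‖ = 1 := by exact_mod_cast h.symm
    exact (mul_self_eq_one_iff.1 this).resolve_right (by linarith [norm_nonneg q])
  refine ⟨Units.mk0 q (norm_ne_zero_iff.1 (by simp [hnorm])), Subtype.ext ?_⟩
  change quaternionMatrix (‖q‖⁻¹ • q) = g
  rw [hnorm, inv_one, one_smul, hq]

lemma toSU2_realUnit_of_pos {t : ℝˣ} (ht : 0 < (t : ℝ)) : toSU2 (realUnit t) = 1 := by
  refine Subtype.ext ?_
  change quaternionMatrix (‖((t : ℝ) : ℍ)‖⁻¹ • ((t : ℝ) : ℍ)) = 1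
  rw [norm_coe, Real.norm_of_nonneg ht.le, ← coe_smul]
  simp

lemma toSU2_realUnit (t : ℝˣ) : toSU2 (realUnit t) = 1 ∨ toSU2 (realUnit t) = toSU2 (-1) := by
  obtain ht | ht := t.ne_zero.lt_or_gt
  · right
    have h : realUnit t = realUnit (-t) * -1 := by ext <;> simp
    rw [h, map_mul, toSU2_realUnit_of_pos (by simpa using ht), one_mul]
  · exact .inl (toSU2_realUnit_of_pos ht)

lemma lie_qI_qJ : ⁅qI, qJ⁆ = 2 • qK := by rw [two_nsmul]; ext <;> simp [Ring.lie_def]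

lemma lie_qJ_qK : ⁅qJ, qK⁆ = 2 • qI := by rw [two_nsmul]; ext <;> simp [Ring.lie_def]

lemma lie_qK_qI : ⁅qK, qI⁆ = 2 • qJ := by rw [two_nsmul]; ext <;> simp [Ring.lie_def]

section Differential

variable {𝔸 : Type*} [NormedRing 𝔸] [NormedAlgebra ℝ 𝔸] [CompleteSpace 𝔸] (ρ : ℍˣ →ₜ* 𝔸)

lemma apply_mul_differential {g : ℍˣ} {X Y : ℍ} (h : g * X = Y * g) :
    ρ g * differential ρ X = differential ρ Y * ρ g := by
  rw [← (Units.mul_inv_eq_iff_eq_mul _).2 h, differential_conj, mul_assoc, ← map_mul,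
    inv_mul_cancel, map_one, mul_one]

lemma apply_mul_eq_of_differential_mul_eq_zero {a : 𝔸} (h : ∀ X, differential ρ X * a = 0)
    (g : ℍˣ) : ρ g * a = a := by
  obtain ⟨X, rfl⟩ := expUnit_surjective g
  have hconst t : HasDerivAt (fun _ : ℝ => a) (differential ρ X * a) t := by
    rw [h]
    exact hasDerivAt_const t a
  rw [apply_expUnit]
  simpa using (eq_exp_smul_mul_of_hasDerivAt hconst 1).symm

lemma differential_one {ρ : ℍˣ →ₜ* 𝔸} (h : ∀ t : ℝˣ, 0 < (t : ℝ) → ρ (realUnit t) = 1) :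
    differential ρ 1 = 0 := by
  refine differential_unique ρ fun t => ?_
  have hexp : expUnit (t • (1 : ℍ)) = realUnit (Units.mk0 _ (Real.exp_ne_zero t)) := by
    ext1
    simp [expUnit, ← Algebra.algebraMap_eq_smul_one, Real.exp_eq_exp_ℝ]
  rw [hexp, h _ (by simpa using Real.exp_pos t), smul_zero, exp_zero]

lemma eq_one_of_differential_qI_eq_zero {ρ : ℍˣ →ₜ* 𝔸}
    (hreal : ∀ t : ℝˣ, 0 < (t : ℝ) → ρ (realUnit t) = 1) (hI : differential ρ qI = 0) (g : ℍˣ) :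
    ρ g = 1 := by
  have hunit (g : ℍˣ) {a : 𝔸} (h : a * ρ g = 0) : a = 0 := by
    rw [← mul_one a, ← map_one ρ, ← mul_inv_cancel g, map_mul, ← mul_assoc, h, zero_mul]
  have hJ : differential ρ qJ = 0 :=
    hunit unitC (by rw [← apply_mul_differential ρ (X := qI) (by ext <;> simp), hI, mul_zero])
  have hK : differential ρ qK = 0 :=
    hunit unitC (by rw [← apply_mul_differential ρ (X := qJ) (by ext <;> simp), hJ, mul_zero])
  have hall X : differential ρ X * 1 = 0 := by
    rw [eq_add_smul X]
    simp [hI, hJ, hK, differential_one hreal]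
  simpa using apply_mul_eq_of_differential_mul_eq_zero ρ hall g

lemma lie_differential_qI_qJ :
    ⁅differential ρ qI, differential ρ qJ⁆ = 2 • differential ρ qK := by
  rw [← differential_lie, lie_qI_qJ, map_nsmul]

lemma lie_differential_qJ_qK :
    ⁅differential ρ qJ, differential ρ qK⁆ = 2 • differential ρ qI := by
  rw [← differential_lie, lie_qJ_qK, map_nsmul]

lemma lie_differential_qK_qI :
    ⁅differential ρ qK, differential ρ qI⁆ = 2 • differential ρ qJ := by
  rw [← differential_lie, lie_qK_qI, map_nsmul]

end Differential

section Brackets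

variable {R : Type*} [Ring R] {a b c e : R}

lemma mul_mul_eq_two_smul (hab : ⁅a, b⁆ = 2 • c) (hae : a * e = 0) :
    a * (b * e) = 2 • (c * e) := by
  rw [← smul_mul_assoc, ← hab, Ring.lie_def, sub_mul, mul_assoc, mul_assoc, hae, mul_zero, sub_zero]

lemma mul_mul_eq_neg_two_smul (hca : ⁅c, a⁆ = 2 • b) (hae : a * e = 0) :
    a * (c * e) = -(2 • (b * e)) := by
  rw [← smul_mul_assoc, ← hca, Ring.lie_def, sub_mul, mul_assoc, mul_assoc, hae, mul_zero, zero_sub,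
    neg_neg]

lemma mul_mul_eq_zero (hbc : ⁅b, c⁆ = 2 • a) (hae : a * e = 0) (hbce : b * (c * e) = 0) :
    c * (b * e) = 0 := by
  have h := congrArg (· * e) hbc
  simpa [Ring.lie_def, sub_mul, mul_assoc, hae, hbce] using h

lemma mul_mul_self_eq [IsAddTorsionFree R] (hab : ⁅a, b⁆ = 2 • c) (hca : ⁅c, a⁆ = 2 • b)
    (hae : a * e = 0) (hbce : b * (c * e) = 0) : b * (b * e) = c * (c * e) := by
  have h := congrArg (· * (c * e)) hab
  simp only [Ring.lie_def, sub_mul, mul_assoc, hbce, mul_mul_eq_neg_two_smul hca hae, mul_zero,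
    mul_neg, mul_smul_comm, smul_mul_assoc, zero_sub, neg_neg] at h
  exact nsmul_right_injective two_ne_zero h

lemma eq_neg_four {K : Type*} [Field K] [Algebra K R] {x : K} (hab : ⁅a, b⁆ = 2 • c)
    (hbc : ⁅b, c⁆ = 2 • a) (hae : a * e = 0) (hcbe : c * (b * e) = 0) (hce : c * e ≠ 0)
    (hx : b * (b * e) = x • e) : x = -4 := by
  have h := congrArg (· * (b * e)) hbc
  simp only [Ring.lie_def, sub_mul, mul_assoc, hcbe, hx, mul_mul_eq_two_smul hab hae, mul_zero,
    mul_smul_comm, smul_mul_assoc, zero_sub] at h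
  refine smul_left_injective K hce (?_ : x • (c * e) = (-4 : K) • (c * e))
  rw [← neg_eq_iff_eq_neg.2 h.symm]
  module

end Brackets

section VectorRep

variable {𝔸 : Type*} [NormedRing 𝔸] [NormedAlgebra ℂ 𝔸]

/-- The projection onto the vectors fixed by `i`. -/
noncomputable def axis (V : ℍˣ →ₜ* 𝔸) : 𝔸 := (2⁻¹ : ℂ) • (1 + V unitI)

/-- Representations of `ℍˣ / ℝˣ` whose restriction to the Klein four-group generated by `i` and `j`
is the sum of the three nontrivial characters. -/
structure IsVectorRep (V : ℍˣ →ₜ* 𝔸) : Prop where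
  apply_realUnit (t : ℝˣ) : V (realUnit t) = 1
  sum_eq_zero : 1 + V unitI + V unitJ + V unitI * V unitJ = 0
  axis_ne_zero : axis V ≠ 0
  exists_axis_mul_mul_axis (a : 𝔸) : ∃ x : ℂ, axis V * a * axis V = x • axis V

lemma apply_neg_one {M : Type*} [Monoid M] [TopologicalSpace M] {V : ℍˣ →ₜ* M}
    (hreal : ∀ t, V (realUnit t) = 1) : V (-1) = 1 := by
  rw [← hreal (-1)]
  congr
  ext <;> simp

lemma isIdempotentElem_axis {V : ℍˣ →ₜ* 𝔸} (hneg : V (-1) = 1) : IsIdempotentElem (axis V) :=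
  isIdempotentElem_half_smul_add (one_mul 1) (mul_one _) (one_mul _)
    (by rw [← map_mul, unitI_mul_unitI, hneg])

/-- A multiple of the equivariant map from the imaginary quaternions that takes `i` to the axis. -/
noncomputable def vectorMap [CompleteSpace 𝔸] (V : ℍˣ →ₜ* 𝔸) : ℍ →ₗ[ℝ] 𝔸 :=
  (QuaternionAlgebra.imIₗ _ _ _).smulRight (2 • axis V) +
    (QuaternionAlgebra.imJₗ _ _ _).smulRight (differential V qK * axis V) -
    (QuaternionAlgebra.imKₗ _ _ _).smulRight (differential V qJ * axis V)

lemma vectorMap_apply [CompleteSpace 𝔸] (V : ℍˣ →ₜ* 𝔸) (Y : ℍ) :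
    vectorMap V Y = Y.imI • 2 • axis V + Y.imJ • (differential V qK * axis V) -
      Y.imK • (differential V qJ * axis V) := rfl

lemma commute_axis {V : ℍˣ →ₜ* 𝔸} {a : 𝔸} (ha : Commute (V unitI) a) : Commute (axis V) a :=
  ((Commute.one_left a).add_left ha).smul_left _

variable {V : ℍˣ →ₜ* 𝔸}

lemma apply_unitJ_mul_axis (hV : IsVectorRep V) : V unitJ * axis V = -axis V := by
  have hcomm : V unitJ * V unitI = V unitI * V unitJ := by
    rw [← map_mul, unitJ_mul_unitI, map_mul, apply_neg_one hV.apply_realUnit, one_mul, map_mul]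
  rw [eq_neg_iff_add_eq_zero, ← add_one_mul, axis, mul_smul_comm, smul_eq_zero]
  right
  rw [← hV.sum_eq_zero, add_mul, mul_add, hcomm, one_mul, mul_one]
  abel

-- Such an `a` maps the axis into the joint fixed vectors of `i` and `j`.
lemma mul_axis_eq_zero (hV : IsVectorRep V) {a : 𝔸} (hI : V unitI * a = a * V unitI)
    (hJ : V unitJ * a = -a * V unitJ) : a * axis V = 0 := by
  have ha : axis V * (a * axis V) = a * axis V := by
    rw [← mul_assoc, (commute_axis hI).eq, mul_assoc,
      isIdempotentElem_axis (apply_neg_one hV.apply_realUnit)]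
  have hfix : V unitJ * (a * axis V) = a * axis V := by
    rw [← mul_assoc, hJ, mul_assoc, apply_unitJ_mul_axis hV, neg_mul_neg]
  have hflip : V unitJ * (a * axis V) = -(a * axis V) := by
    rw [← ha, ← mul_assoc, apply_unitJ_mul_axis hV, neg_mul]
  have : IsAddTorsionFree 𝔸 := .of_isTorsionFree ℂ 𝔸
  exact self_eq_neg.1 (hfix.symm.trans hflip)

variable [CompleteSpace 𝔸]

lemma differential_one_eq_zero (hV : IsVectorRep V) : differential V 1 = 0 :=
  differential_one fun t _ => hV.apply_realUnit t

lemma differential_qI_mul_axis (hV : IsVectorRep V) : differential V qI * axis V = 0 :=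
  mul_axis_eq_zero hV (apply_mul_differential V (by ext <;> simp))
    (by rw [← map_neg]; exact apply_mul_differential V (by ext <;> simp))

lemma differential_qJ_mul_differential_qK_mul_axis (hV : IsVectorRep V) :
    differential V qJ * (differential V qK * axis V) = 0 := by
  rw [← mul_assoc]
  refine mul_axis_eq_zero hV ?_ ?_
  · rw [← mul_assoc, apply_mul_differential V (X := qJ) (Y := -qJ) (by ext <;> simp), mul_assoc,
      apply_mul_differential V (X := qK) (Y := -qK) (by ext <;> simp), ← mul_assoc, map_neg,
      map_neg, neg_mul_neg]
  · rw [← mul_assoc, apply_mul_differential V (X := qJ) (Y := qJ) (by ext <;> simp), mul_assoc,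
      apply_mul_differential V (X := qK) (Y := -qK) (by ext <;> simp), ← mul_assoc, map_neg,
      mul_neg]

lemma exists_differential_qJ_mul_self_mul_axis (hV : IsVectorRep V) :
    ∃ x : ℂ, differential V qJ * (differential V qJ * axis V) = x • axis V := by
  obtain ⟨x, hx⟩ := hV.exists_axis_mul_mul_axis (differential V qJ * differential V qJ)
  have hcomm : Commute (V unitI) (differential V qJ * differential V qJ) := by
    rw [Commute, SemiconjBy, ← mul_assoc,
      apply_mul_differential V (X := qJ) (Y := -qJ) (by ext <;> simp), mul_assoc,
      apply_mul_differential V (X := qJ) (Y := -qJ) (by ext <;> simp), ← mul_assoc, map_neg,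
      neg_mul_neg]
  have haxis := isIdempotentElem_axis (apply_neg_one hV.apply_realUnit)
  exact ⟨x, by rw [← hx, (commute_axis hcomm).eq, mul_assoc, haxis, mul_assoc]⟩

lemma differential_qK_mul_axis_ne_zero (hV : IsVectorRep V) : differential V qK * axis V ≠ 0 := by
  have : IsAddTorsionFree 𝔸 := .of_isTorsionFree ℂ 𝔸
  intro hK
  have hI := differential_qI_mul_axis hV
  have hJ : differential V qJ * axis V = 0 := by
    have h := mul_mul_eq_neg_two_smul (lie_differential_qK_qI V) hI
    rwa [hK, mul_zero, eq_comm, neg_eq_zero, smul_eq_zero_iff_right two_ne_zero] at h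
  have hall X : differential V X * axis V = 0 := by
    rw [eq_add_smul X]
    simp [add_mul, hI, hJ, hK, differential_one_eq_zero hV]
  have hfix := apply_mul_eq_of_differential_mul_eq_zero V hall unitJ
  exact hV.axis_ne_zero (self_eq_neg.1 (hfix.symm.trans (apply_unitJ_mul_axis hV)))

lemma differential_qJ_mul_self_mul_axis (hV : IsVectorRep V) :
    differential V qJ * (differential V qJ * axis V) = (-4 : ℂ) • axis V := by
  obtain ⟨x, hx⟩ := exists_differential_qJ_mul_self_mul_axis hV
  rw [hx, eq_neg_four (lie_differential_qI_qJ V) (lie_differential_qJ_qK V)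
    (differential_qI_mul_axis hV)
    (mul_mul_eq_zero (lie_differential_qJ_qK V) (differential_qI_mul_axis hV)
      (differential_qJ_mul_differential_qK_mul_axis hV))
    (differential_qK_mul_axis_ne_zero hV) hx]

lemma vectorMap_lie (hV : IsVectorRep V) (X Y : ℍ) :
    vectorMap V ⁅X, Y⁆ = differential V X * vectorMap V Y := by
  have : IsAddTorsionFree 𝔸 := .of_isTorsionFree ℂ 𝔸
  have hII := differential_qI_mul_axis hV
  have hJK := differential_qJ_mul_differential_qK_mul_axis hV
  have hIJ := mul_mul_eq_two_smul (lie_differential_qI_qJ V) hII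
  have hIK := mul_mul_eq_neg_two_smul (lie_differential_qK_qI V) hII
  have hKJ := mul_mul_eq_zero (lie_differential_qJ_qK V) hII hJK
  have hJJ := differential_qJ_mul_self_mul_axis hV
  have hKK := (mul_mul_self_eq (lie_differential_qI_qJ V) (lie_differential_qK_qI V) hII
    hJK).symm.trans hJJ
  have hX : differential V X = X.imI • differential V qI + X.imJ • differential V qJ +
      X.imK • differential V qK := by
    conv_lhs => rw [eq_add_smul X]
    simp [differential_one_eq_zero hV]
  simp only [hX, vectorMap_apply, add_mul, mul_add, mul_sub, smul_mul_assoc, mul_smul_comm, hII,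
    hJK, hIJ, hIK, hKJ, hJJ, hKK, Ring.lie_def, Quaternion.imI_sub, Quaternion.imJ_sub,
    Quaternion.imK_sub, Quaternion.imI_mul, Quaternion.imJ_mul, Quaternion.imK_mul]
  module

lemma apply_mul_vectorMap (hV : IsVectorRep V) (g : ℍˣ) (Y : ℍ) :
    V g * vectorMap V Y = vectorMap V (g * Y * ↑g⁻¹) := by
  obtain ⟨X, rfl⟩ := expUnit_surjective g
  rw [map_expUnit_conj (vectorMap_lie hV X), apply_expUnit]

lemma vectorMap_qI_ne_zero (hV : IsVectorRep V) : vectorMap V qI ≠ 0 := by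
  have : IsAddTorsionFree 𝔸 := .of_isTorsionFree ℂ 𝔸
  have h : vectorMap V qI = 2 • axis V := by rw [vectorMap_apply]; simp [-nsmul_eq_mul]
  rw [h]
  exact (smul_ne_zero_iff_right two_ne_zero).2 hV.axis_ne_zero

end VectorRep

section Intertwiner

-- The conjugate of `X` by `g` depends orthogonally on `X`.
lemma sum_conj {M : Type*} [AddCommGroup M] [Module ℝ M] (B : ℍ →ₗ[ℝ] ℍ →ₗ[ℝ] M) (g : ℍˣ) :
    B (g * qI * ↑g⁻¹) (g * qI * ↑g⁻¹) + B (g * qJ * ↑g⁻¹) (g * qJ * ↑g⁻¹) +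
      B (g * qK * ↑g⁻¹) (g * qK * ↑g⁻¹) = B qI qI + B qJ qJ + B qK qK := by
  have hg : normSq (g : ℍ) ≠ 0 := by simp
  have hconj (X : ℍ) : ∃ Y, Y = g * X * star (g : ℍ) ∧
      (g * X * ↑g⁻¹ : ℍ) = (normSq (g : ℍ))⁻¹ • (Y.re • 1 + Y.imI • qI + Y.imJ • qJ + Y.imK • qK) :=
    ⟨_, rfl, by rw [← eq_add_smul, Units.val_inv_eq_inv_val, inv_def, mul_smul_comm]⟩
  obtain ⟨X, hX, hgX⟩ := hconj qI
  obtain ⟨Y, hY, hgY⟩ := hconj qJ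
  obtain ⟨Z, hZ, hgZ⟩ := hconj qK
  rw [hgX, hgY, hgZ]
  subst hX hY hZ
  simp only [re_mul, re_qI, mul_zero, imI_qI, mul_one, zero_sub, imJ_qI, sub_zero, imK_qI, re_star,
    neg_mul, imI_mul, add_zero, imI_star, mul_neg, sub_neg_eq_add, imJ_mul, sub_self, zero_add,
    imJ_star, imK_mul, imK_star, neg_neg, smul_add, map_add, map_smul, LinearMap.add_apply,
    LinearMap.smul_apply, re_qJ, imI_qJ, imJ_qJ, imK_qJ, re_qK, imI_qK, imJ_qK, imK_qK]
  match_scalars <;> field_simp <;> simp only [normSq_def'] <;> ring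

variable {ι κ : Type*} {P : ℍ →ₗ[ℝ] Matrix ι ι ℂ} {Q : ℍ →ₗ[ℝ] Matrix κ κ ℂ}

/-- The contraction of `P ⊗ Q` with the invariant inner product of the imaginary quaternions. -/
noncomputable def contraction (P : ℍ →ₗ[ℝ] Matrix ι ι ℂ) (Q : ℍ →ₗ[ℝ] Matrix κ κ ℂ) :
    Matrix (ι × κ) (ι × κ) ℂ :=
  P qI ⊗ₖ Q qI + P qJ ⊗ₖ Q qJ + P qK ⊗ₖ Q qK

lemma contraction_conj (g : ℍˣ) : P (g * qI * ↑g⁻¹) ⊗ₖ Q (g * qI * ↑g⁻¹) +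
    P (g * qJ * ↑g⁻¹) ⊗ₖ Q (g * qJ * ↑g⁻¹) + P (g * qK * ↑g⁻¹) ⊗ₖ Q (g * qK * ↑g⁻¹) =
      contraction P Q :=
  sum_conj (LinearMap.compl₁₂ (Matrix.kroneckerBilinear (R := ℝ) (α := ℂ)) P Q) g

variable [Fintype ι] {V : ℍˣ → Matrix ι ι ℂ}

lemma kronecker_mul_contraction [DecidableEq ι] [Fintype κ] {W : ℍˣ → Matrix κ κ ℂ}
    (hP : ∀ g Y, V g * P Y = P (g * Y * ↑g⁻¹))
    (hQ : ∀ g Y, W g * Q Y = Q (g * Y * ↑g⁻¹) * W g) (g : ℍˣ) :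
    (V g ⊗ₖ W g) * contraction P Q = contraction P Q * (1 ⊗ₖ W g) := by
  have hPQ (Y : ℍ) : (V g ⊗ₖ W g) * (P Y ⊗ₖ Q Y) =
      P (g * Y * ↑g⁻¹) ⊗ₖ Q (g * Y * ↑g⁻¹) * (1 ⊗ₖ W g) := by
    rw [← Matrix.mul_kronecker_mul, ← Matrix.mul_kronecker_mul, hP, hQ, mul_one]
  rw [contraction, mul_add, mul_add, hPQ, hPQ, hPQ, ← add_mul, ← add_mul, contraction_conj,
    contraction]

lemma contraction_ne_zero [Finite κ] (hP : ∀ g Y, V g * P Y = P (g * Y * ↑g⁻¹))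
    (hPI : P qI ≠ 0) (hQI : Q qI ≠ 0) : contraction P Q ≠ 0 := by
  classical
  cases nonempty_fintype κ
  intro h0
  have hI : V unitI * P qI = P qI := by
    rw [hP, (Units.mul_inv_eq_iff_eq_mul _).2 (_ : _ = qI * _)]; ext <;> simp
  have hJ : V unitI * P qJ = -P qJ := by
    rw [hP, (Units.mul_inv_eq_iff_eq_mul _).2 (_ : _ = -qJ * _), map_neg]; ext <;> simp
  have hK : V unitI * P qK = -P qK := by
    rw [hP, (Units.mul_inv_eq_iff_eq_mul _).2 (_ : _ = -qK * _), map_neg]; ext <;> simp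
  have hproj : ((1 + V unitI) ⊗ₖ (1 : Matrix κ κ ℂ)) * contraction P Q =
      (2 : ℂ) • (P qI ⊗ₖ Q qI) := by
    simp only [contraction, mul_add, ← Matrix.mul_kronecker_mul, add_mul, one_mul, hI, hJ, hK,
      add_neg_cancel, Matrix.zero_kronecker, add_zero, ← two_smul ℂ (P qI), Matrix.smul_kronecker]
  rw [h0, mul_zero] at hproj
  have hPQ := (smul_eq_zero.1 hproj.symm).resolve_left two_ne_zero
  obtain ⟨i, j, hij⟩ : ∃ i j, P qI i j ≠ 0 := by simpa [← Matrix.ext_iff] using hPI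
  obtain ⟨k, l, hkl⟩ : ∃ k l, Q qI k l ≠ 0 := by simpa [← Matrix.ext_iff] using hQI
  exact mul_ne_zero hij hkl (congrFun₂ hPQ (i, k) (j, l))

lemma exists_intertwiner [Fintype κ] {W : ℍˣ → Matrix κ κ ℂ}
    (hP : ∀ g Y, V g * P Y = P (g * Y * ↑g⁻¹))
    (hQ : ∀ g Y, W g * Q Y = Q (g * Y * ↑g⁻¹) * W g) (hPI : P qI ≠ 0) (hQI : Q qI ≠ 0) :
    ∃ C : Matrix (ι × κ) κ ℂ, C ≠ 0 ∧ ∀ g, (V g ⊗ₖ W g) * C = C * W g := by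
  classical
  obtain ⟨a, ⟨l, b⟩, hab⟩ : ∃ a b, contraction P Q a b ≠ 0 := by
    simpa [← Matrix.ext_iff] using contraction_ne_zero hP hPI hQI
  refine ⟨(contraction P Q).submatrix id (l, ·), fun h => hab (congrFun₂ h a b), fun g => ?_⟩
  ext x y
  have h := congrFun₂ (kronecker_mul_contraction hP hQ g) x (l, y)
  simpa [Matrix.mul_apply, Fintype.sum_prod_type, Matrix.one_apply] using h

end Intertwiner

section Equivariant

open scoped Matrix.Norms.Operator

variable {ι : Type*} [Fintype ι] [DecidableEq ι]

lemma isVectorRep_of_card_eq_three (hcard : Fintype.card ι = 3) {V : ℍˣ →ₜ* Matrix ι ι ℂ}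
    (hreal : ∀ t, V (realUnit t) = 1) (hI : V unitI ≠ 1) : IsVectorRep V := by
  have hneg : V (-1) = V 1 := by rw [apply_neg_one hreal, map_one]
  have hrank : (V 1).rank ≤ 3 := by rw [map_one, Matrix.rank_one, hcard]
  obtain h | ⟨hsum, htr⟩ := unitI_eq_or_add_add_add_eq_zero (V : ℍˣ →ₙ* Matrix ι ι ℂ) hneg hrank
  · exact absurd (h.trans (map_one V)) hI
  have haxis : (axis V).rank = 1 := by
    have h : ((2⁻¹ : ℂ) • (1 + V unitI)).trace = (axis V).rank :=
      trace_eq_rank (isIdempotentElem_axis (hneg.trans (map_one V)))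
    rw [Matrix.trace_smul, Matrix.trace_add, Matrix.trace_one, hcard,
      show (V unitI).trace = -1 from htr] at h
    rw [← Nat.cast_inj (R := ℂ), ← h]
    norm_num
  exact ⟨hreal, by rwa [← map_one V], fun h => by simp [h] at haxis, exists_mul_mul_eq_smul haxis⟩

lemma exists_equivariant_of_card_eq_three (hcard : Fintype.card ι = 3) {V : ℍˣ →ₜ* Matrix ι ι ℂ}
    (hreal : ∀ t, V (realUnit t) = 1) (hI : V unitI ≠ 1) :
    ∃ P : ℍ →ₗ[ℝ] Matrix ι ι ℂ, P qI ≠ 0 ∧ ∀ g Y, V g * P Y = P (g * Y * ↑g⁻¹) :=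
  have hV := isVectorRep_of_card_eq_three hcard hreal hI
  ⟨vectorMap V, vectorMap_qI_ne_zero hV, apply_mul_vectorMap hV⟩

lemma exists_equivariant_of_ne_one {W : ℍˣ →ₜ* Matrix ι ι ℂ}
    (hreal : ∀ t : ℝˣ, 0 < (t : ℝ) → W (realUnit t) = 1) {g : ℍˣ} (hg : W g ≠ 1) :
    ∃ Q : ℍ →ₗ[ℝ] Matrix ι ι ℂ, Q qI ≠ 0 ∧ ∀ g Y, W g * Q Y = Q (g * Y * ↑g⁻¹) * W g :=
  ⟨differential W, fun hI => hg (eq_one_of_differential_qI_eq_zero hreal hI g), fun g Y =>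
    apply_mul_differential W (by rw [mul_assoc _ (_ : ℍ) _, Units.inv_mul, mul_one])⟩

end Equivariant

section Twist

variable {K G A B : Type*} [CommRing K] [Group G] [Ring A] [Algebra K A] [Ring B] [Algebra K B]

/-- Covariance of a not necessarily unital homomorphism `N` with respect to `U` and conjugation
by `W`. -/
def IsCovariant (N : A →ₙₐ[K] B) (U : G →* B) (W : G →* A) : Prop :=
  ∀ g a, U g * N a = N (W g * a * W g⁻¹) * U g

variable {N : A →ₙₐ[K] B} {U : G →* B} {W : G →* A} (hcov : IsCovariant N U W)

/-- The homomorphism `g ↦ N (W g)⁻¹ U g` into the commutant of the range of `N`. -/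
def twist : G →ₙ* B where
  toFun g := N (W g⁻¹) * U g
  map_mul' g h := by
    rw [mul_assoc, ← mul_assoc (U g), hcov, ← mul_assoc, ← mul_assoc, ← map_mul N, ← mul_assoc,
      ← mul_assoc, ← map_mul W, inv_mul_cancel, map_one, one_mul, mul_assoc, ← map_mul U,
      ← map_mul W, mul_inv_rev]

lemma twist_apply (g : G) : twist hcov g = N (W g⁻¹) * U g := rfl

lemma twist_one : twist hcov 1 = N 1 := by simp [twist_apply]

lemma commute_twist (g : G) (a : A) : Commute (twist hcov g) (N a) := by
  rw [Commute, SemiconjBy, twist_apply, mul_assoc, hcov, ← mul_assoc, ← mul_assoc, ← map_mul N,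
    ← map_mul N, ← mul_assoc, ← mul_assoc, ← map_mul W, inv_mul_cancel, map_one, one_mul]

lemma twist_eq_one_of_scalar {g : G} {ω : K} (hU : U g = ω • 1) (hW : W g = ω • 1) :
    twist hcov g = twist hcov 1 := by
  rw [twist_one, twist_apply, hU, mul_smul_comm, mul_one, ← map_smul, ← mul_one (W g⁻¹),
    ← mul_smul_comm, ← hW, ← map_mul, inv_mul_cancel, map_one]

lemma apply_mul_map_one {g : G} (h : twist hcov g = N 1) : U g * N 1 = N (W g) := by
  have hW : W g * W g⁻¹ = 1 := by rw [← map_mul, mul_inv_cancel, map_one]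
  rw [hcov, mul_one, hW]
  calc N 1 * U g = N (W g) * twist hcov g := by
        rw [twist_apply, ← mul_assoc, ← map_mul N, hW]
    _ = N (W g) := by rw [h, ← map_mul, mul_one]

end Twist

section MatrixUnits

variable {κ : Type*} [Fintype κ] [DecidableEq κ]

lemma sum_single_mul_single {K : Type*} [CommRing K] (a : κ) :
    ∑ b, Matrix.single b a (1 : K) * Matrix.single a a 1 * Matrix.single a b 1 = 1 := by
  simp only [Matrix.single_mul_single_same, mul_one]
  exact Matrix.sum_single_one

lemma mul_map_one_eq_zero {K B : Type*} [CommRing K] [Ring B] [Algebra K B]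
    {N : Matrix κ κ K →ₙₐ[K] B} {x : B} (hx : ∀ f, Commute x (N f)) {a : κ}
    (ha : x * N (Matrix.single a a 1) = 0) : x * N 1 = 0 := by
  rw [← sum_single_mul_single a, map_sum, Finset.mul_sum]
  refine Finset.sum_eq_zero fun b _ => ?_
  rw [map_mul, map_mul, ← mul_assoc, ← mul_assoc, (hx _).eq, mul_assoc (N _), ha, mul_zero,
    zero_mul]

variable {K ι : Type*} [Field K] [Fintype ι] (N : Matrix κ κ K →ₙₐ[K] Matrix ι ι K)

lemma card_mul_trace_map (f : Matrix κ κ K) :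
    Fintype.card κ * (N f).trace = (N 1).trace * f.trace := by
  have hsum : ∑ b, ∑ a, Matrix.single b a (1 : K) * f * Matrix.single a b 1 = f.trace • 1 := by
    simp_rw [Matrix.single_mul_mul_single, one_mul, mul_one, ← Matrix.sum_single_one,
      Finset.smul_sum, Matrix.smul_single, smul_eq_mul, mul_one, Matrix.trace, Matrix.diag_apply]
    refine Finset.sum_congr rfl fun b _ => ?_
    exact (map_sum (Matrix.singleAddMonoidHom (α := K) b b) _ _).symm
  have htrace (b : κ) :
      ∑ a, (N (Matrix.single b a 1 * f * Matrix.single a b 1)).trace = (N f).trace := calc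
    _ = ∑ a, (N (f * Matrix.single a a 1)).trace := by
      refine Finset.sum_congr rfl fun a _ => ?_
      rw [mul_assoc, map_mul, Matrix.trace_mul_comm, ← map_mul, mul_assoc,
        Matrix.single_mul_single_same, one_mul]
    _ = (N f).trace := by
      rw [← Matrix.trace_sum, ← map_sum, ← Finset.mul_sum, Matrix.sum_single_one, mul_one]
  calc Fintype.card κ * (N f).trace
      = (N (∑ b, ∑ a, Matrix.single b a (1 : K) * f * Matrix.single a b 1)).trace := by
        simp only [map_sum, Matrix.trace_sum, htrace, Finset.sum_const, Finset.card_univ,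
          nsmul_eq_mul]
    _ = (N 1).trace * f.trace := by
      rw [hsum, map_smul, Matrix.trace_smul, smul_eq_mul, mul_comm]

lemma rank_map_single_le [CharZero K] {d : ℕ} (hcard : Fintype.card ι ≤ d * Fintype.card κ)
    (a : κ) : (N (Matrix.single a a 1)).rank ≤ d := by
  have hidem {f : Matrix κ κ K} (hf : IsIdempotentElem f) : IsIdempotentElem (N f) := by
    rw [IsIdempotentElem, ← map_mul, hf]
  have hrank : (N 1).rank = Fintype.card κ * (N (Matrix.single a a 1)).rank := by
    have h := card_mul_trace_map N (Matrix.single a a 1)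
    rw [Matrix.trace_single_eq_same, mul_one, trace_eq_rank (hidem (one_mul 1)),
      trace_eq_rank (hidem (by simp [IsIdempotentElem]))] at h
    exact_mod_cast h.symm
  have : Nonempty κ := ⟨a⟩
  refine Nat.le_of_mul_le_mul_left ?_ (Fintype.card_pos (α := κ))
  rw [← hrank, mul_comm]
  exact (Matrix.rank_le_card_width _).trans hcard

end MatrixUnits

section Rigidity

variable {ι κ : Type*} [Fintype ι] [Fintype κ] [DecidableEq ι] [DecidableEq κ]
  {N : Matrix κ κ ℂ →ₙₐ[ℂ] Matrix ι ι ℂ} {U : ℍˣ →* Matrix ι ι ℂ} {W : ℍˣ →* Matrix κ κ ℂ}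
  {C : Matrix ι κ ℂ} (hcov : IsCovariant N U W)

lemma twist_mul_eq (hNC : ∀ f, N f * C = C * f) (hUC : ∀ g, U g * C = C * W g) (g : ℍˣ) :
    twist hcov g * C = C := by
  rw [twist_apply, Matrix.mul_assoc, hUC, ← Matrix.mul_assoc, hNC, Matrix.mul_assoc, ← map_mul,
    inv_mul_cancel, map_one, Matrix.mul_one]

/-- The restriction of `twist` to the range of the image of a minimal projection. -/
noncomputable def twistCorner (a : κ) : ℍˣ →ₙ* Matrix ι ι ℂ where
  toFun g := twist hcov g * N (Matrix.single a a 1)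
  map_mul' g h := by
    have hidem : N (Matrix.single a a 1) * N (Matrix.single a a 1) = N (Matrix.single a a 1) := by
      rw [← map_mul, Matrix.single_mul_single_same, mul_one]
    rw [mul_assoc, ← mul_assoc _ (twist hcov h), ← (commute_twist hcov h _).eq, mul_assoc _ (N _),
      hidem, map_mul, mul_assoc]

lemma twistCorner_apply (a : κ) (g : ℍˣ) :
    twistCorner hcov a g = twist hcov g * N (Matrix.single a a 1) := rfl

lemma twistCorner_one (a : κ) : twistCorner hcov a 1 = N (Matrix.single a a 1) := by
  rw [twistCorner_apply, twist_one, ← map_mul, one_mul]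

lemma sum_twist_mul_map_one_ne_zero (hNC : ∀ f, N f * C = C * f)
    (hUC : ∀ g, U g * C = C * W g) (hC : C ≠ 0) :
    (twist hcov 1 + twist hcov unitI + twist hcov unitJ + twist hcov unitI * twist hcov unitJ)
      * N 1 ≠ 0 := by
  intro h
  have hfour : (4 : ℂ) • C = 0 := calc
    (4 : ℂ) • C = (twist hcov 1 + twist hcov unitI + twist hcov unitJ
        + twist hcov unitI * twist hcov unitJ) * (N 1 * C) := by
      rw [hNC, Matrix.mul_one, ← map_mul]
      simp only [Matrix.add_mul, twist_mul_eq hcov hNC hUC]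
      module
    _ = 0 := by rw [← Matrix.mul_assoc, h, Matrix.zero_mul]
  exact hC ((smul_eq_zero.1 hfour).resolve_left (by norm_num))

-- The twist acts on the range of a minimal projection of `N` in dimension at most three. The
-- intertwiner `C` provides a fixed vector there, which excludes the three nontrivial characters of
-- the Klein four-group as its restriction to the images of `i` and `j`.
lemma twistCorner_unitI (hNC : ∀ f, N f * C = C * f) (hUC : ∀ g, U g * C = C * W g)
    (hC : C ≠ 0) (hcard : Fintype.card ι ≤ 3 * Fintype.card κ)
    (hscalar : ∃ ω : ℂ, U (-1) = ω • 1 ∧ W (-1) = ω • 1) (a : κ) :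
    twistCorner hcov a unitI = twistCorner hcov a 1 := by
  have hneg : twistCorner hcov a (-1) = twistCorner hcov a 1 := by
    obtain ⟨ω, hU, hW⟩ := hscalar
    rw [twistCorner_apply, twistCorner_apply, twist_eq_one_of_scalar hcov hU hW]
  have hrank : (twistCorner hcov a 1).rank ≤ 3 := by
    rw [twistCorner_one]
    exact rank_map_single_le N hcard a
  refine (unitI_eq_or_add_add_add_eq_zero _ hneg hrank).resolve_right fun h => ?_
  refine sum_twist_mul_map_one_ne_zero hcov hNC hUC hC
    (mul_map_one_eq_zero (fun f => ?_) (a := a) ?_)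
  · exact (((commute_twist hcov _ f).add_left (commute_twist hcov _ f)).add_left
      (commute_twist hcov _ f)).add_left
        ((commute_twist hcov _ f).mul_left (commute_twist hcov _ f))
  · rw [← h.1, ← map_mul (twistCorner hcov a)]
    simp only [twistCorner_apply, map_mul (twist hcov), add_mul]

theorem apply_mul_map_one_eq (hcov : IsCovariant N U W) (hNC : ∀ f, N f * C = C * f)
    (hUC : ∀ g, U g * C = C * W g) (hC : C ≠ 0) (hcard : Fintype.card ι ≤ 3 * Fintype.card κ)
    (hreal : ∀ t, ∃ ω : ℂ, U (realUnit t) = ω • 1 ∧ W (realUnit t) = ω • 1) (g : ℍˣ) :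
    U g * N 1 = N (W g) := by
  obtain ⟨a⟩ : Nonempty κ := by
    by_contra! h
    exact hC (Subsingleton.elim _ _)
  have hneg : ∃ ω : ℂ, U (-1) = ω • 1 ∧ W (-1) = ω • 1 := by
    simpa only [show realUnit (-1) = -1 by ext <;> simp] using hreal (-1)
  have hcorner : twistCorner hcov a g = twistCorner hcov a 1 := by
    refine apply_eq_apply_one (fun t => ?_)
      (twistCorner_unitI hcov hNC hUC hC hcard hneg a) g
    obtain ⟨ω, hU, hW⟩ := hreal t
    rw [twistCorner_apply, twistCorner_apply, twist_eq_one_of_scalar hcov hU hW]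
  have hdiff : (twist hcov g - N 1) * N 1 = 0 := by
    refine mul_map_one_eq_zero (fun f => (commute_twist hcov g f).sub_left ?_) (a := a) ?_
    · exact twist_one hcov ▸ commute_twist hcov 1 f
    · rw [sub_mul, ← twistCorner_apply hcov, hcorner, twistCorner_one, ← map_mul, one_mul, sub_self]
  refine apply_mul_map_one hcov ?_
  rw [sub_mul, ← twist_one hcov, ← map_mul, ← map_mul, mul_one, mul_one, sub_eq_zero] at hdiff
  rw [hdiff, twist_one]

end Rigidity

lemma apply_eq_one_of_eventually {M : Type*} [MulOneClass M] {ρ : ℍˣ →* M}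
    (h : ∀ᶠ g in 𝓝 1, ρ g = 1) (g : ℍˣ) : ρ g = 1 := by
  have : ConnectedSpace ℍˣ := expUnit_surjective.connectedSpace continuous_expUnit
  have hopen : IsOpen (ρ.ker : Set ℍˣ) := ρ.ker.isOpen_of_mem_nhds h
  have hclopen : IsClopen (ρ.ker : Set ℍˣ) := ⟨ρ.ker.isClosed_of_isOpen hopen, hopen⟩
  exact (hclopen.eq_univ (OneMemClass.coe_nonempty ρ.ker)).ge trivial

section MatrixRep

variable {n : ℕ} {w : SU2 → Fin n → Fin n → ℂ} (hw : RepData w)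

/-- The matrix representation given by `RepData`, pulled back to `ℍˣ` along `toSU2`. -/
noncomputable def lift : ℍˣ →ₜ* Matrix (Fin n) (Fin n) ℂ where
  toFun g := Matrix.of (w (toSU2 g))
  map_one' := by ext i j; simp [hw.1, Matrix.one_apply]
  map_mul' g h := by ext i j; simp [hw.2.1, Matrix.mul_apply]
  continuous_toFun :=
    continuous_matrix fun i j => (hw.2.2.2.2 i j).comp toSU2.continuous_toFun

lemma lift_apply (g : ℍˣ) : lift hw g = Matrix.of (w (toSU2 g)) := rfl

lemma lift_mul_star (g : ℍˣ) : lift hw g * star (lift hw g) = 1 := by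
  ext i j
  simpa [lift_apply, Matrix.mul_apply, Matrix.one_apply] using hw.2.2.1 (toSU2 g) i j

lemma lift_inv (g : ℍˣ) : lift hw g⁻¹ = star (lift hw g) := by
  rw [← one_mul (star _), ← map_one (lift hw), ← inv_mul_cancel g, map_mul, mul_assoc,
    lift_mul_star, mul_one]

lemma lift_realUnit_of_pos {t : ℝˣ} (ht : 0 < (t : ℝ)) : lift hw (realUnit t) = 1 := by
  rw [lift_apply, toSU2_realUnit_of_pos ht, ← map_one toSU2, ← lift_apply hw, map_one]

lemma lift_realUnit (t : ℝˣ) : lift hw (realUnit t) = 1 ∨ lift hw (realUnit t) = lift hw (-1) := by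
  refine (toSU2_realUnit t).imp (fun h => ?_) (fun h => ?_)
  · rw [lift_apply, h, ← map_one toSU2, ← lift_apply hw, map_one]
  · rw [lift_apply, h, lift_apply]

lemma exists_eq_smul_one_of_commute (hirr : IsIrr w) {A : Matrix (Fin n) (Fin n) ℂ}
    (hA : ∀ g, Commute A (lift hw g)) : ∃ c : ℂ, A = c • 1 := by
  obtain ⟨c, hc⟩ := hirr A fun k i j => by
    obtain ⟨g, rfl⟩ := toSU2_surjective k
    simpa [lift_apply, Matrix.mul_apply] using congrFun₂ (hA g).eq i j
  exact ⟨c, by ext i j; simp [hc, Matrix.one_apply]⟩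

lemma exists_lift_neg_one_eq_smul (hirr : IsIrr w) : ∃ ω : ℂ, lift hw (-1) = ω • 1 :=
  exists_eq_smul_one_of_commute hw hirr fun g => (Commute.neg_one_left g).map (lift hw)

lemma exists_lift_ne_one (hirr : IsIrr w) (hn : 2 ≤ n) : ∃ g, lift hw g ≠ 1 := by
  by_contra! h
  have : Nontrivial (Fin n) := Fin.nontrivial_iff_two_le.2 hn
  obtain ⟨i, j, hij⟩ := exists_pair_ne (Fin n)
  obtain ⟨c, hc⟩ := exists_eq_smul_one_of_commute hw hirr (A := Matrix.single i j 1) fun g => by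
    rw [h]
    exact Commute.one_right _
  simpa [hij] using congrFun₂ hc i j

-- `-1` is a commutator, so it has determinant one.
lemma lift_neg_one_of_odd (hirr : IsIrr w) (hn : Odd n) : lift hw (-1) = 1 := by
  obtain ⟨ω, hω⟩ := exists_lift_neg_one_eq_smul hw hirr
  have hsq : ω ^ 2 = 1 := by
    have h : lift hw (-1) * lift hw (-1) = 1 := by rw [← map_mul, neg_one_mul, neg_neg, map_one]
    have : NeZero n := ⟨hn.pos.ne'⟩
    simpa [hω, pow_two] using congrFun₂ h 0 0
  have hpow : ω ^ n = 1 := by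
    have hdet (g : ℍˣ) : (lift hw g).det ≠ 0 := by
      refine (Matrix.isUnit_iff_isUnit_det _).1 ?_ |>.ne_zero
      exact (Group.isUnit g).map (lift hw)
    have h := congrArg Matrix.det (congrArg (lift hw) unitJ_mul_unitI)
    rw [map_mul, map_mul, map_mul, Matrix.det_mul, Matrix.det_mul, Matrix.det_mul, hω,
      Matrix.det_smul, Matrix.det_one, mul_one, Fintype.card_fin, mul_comm] at h
    exact (mul_eq_right₀ (mul_ne_zero (hdet _) (hdet _))).1 h.symm
  obtain ⟨m, rfl⟩ := hn
  rw [pow_succ, pow_mul, hsq, one_pow, one_mul] at hpow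
  rw [hω, hpow, one_smul]

lemma lift_realUnit_of_odd (hirr : IsIrr w) (hn : Odd n) (t : ℝˣ) :
    lift hw (realUnit t) = 1 :=
  (lift_realUnit hw t).elim id fun h => h.trans (lift_neg_one_of_odd hw hirr hn)

lemma exists_lift_realUnit_eq_smul (hirr : IsIrr w) (t : ℝˣ) :
    ∃ ω : ℂ, lift hw (realUnit t) = ω • 1 :=
  (lift_realUnit hw t).elim (fun h => ⟨1, by rw [h, one_smul]⟩) fun h =>
    h ▸ exists_lift_neg_one_eq_smul hw hirr

lemma lift_unitI_ne_one (hirr : IsIrr w) (hn : Odd n) (hn' : 2 ≤ n) :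
    lift hw unitI ≠ 1 := by
  intro h
  obtain ⟨g, hg⟩ := exists_lift_ne_one hw hirr hn'
  refine hg ((?_ : lift hw g = lift hw 1).trans (map_one _))
  refine apply_eq_apply_one (f := (lift hw).toMonoidHom.toMulHom) (fun t => ?_) ?_ g
  · change lift hw (realUnit t) = lift hw 1
    rw [lift_realUnit_of_odd hw hirr hn, map_one]
  · change lift hw unitI = lift hw 1
    rw [h, map_one]

end MatrixRep

section Character

open scoped ComplexOrder

lemma eq_one_of_trace_eq_card {κ : Type*} [Fintype κ] [DecidableEq κ] {u : Matrix κ κ ℂ}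
    (hu : u * star u = 1) (ht : u.trace = Fintype.card κ) : u = 1 := by
  have h : ((u - 1) * (u - 1)ᴴ).trace = 0 := by
    rw [Matrix.conjTranspose_sub, Matrix.conjTranspose_one, ← Matrix.star_eq_conjTranspose, sub_mul,
      mul_sub, hu, mul_one, one_mul, Matrix.trace_sub, Matrix.trace_sub, Matrix.trace_sub,
      Matrix.star_eq_conjTranspose, Matrix.trace_conjTranspose, ht, Matrix.trace_one]
    simp
  exact sub_eq_zero.1 (Matrix.trace_mul_conjTranspose_self_eq_zero_iff.1 h)

lemma lift_eq_one_of_trace_mul_trace {m n : ℕ} {v : SU2 → Fin m → Fin m → ℂ} (hv : RepData v)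
    {w : SU2 → Fin n → Fin n → ℂ} (hw : RepData w) (hn : n ≠ 0)
    (h : ∀ g, (lift hv g).trace * (lift hw g).trace = m * (lift hw g).trace) (g : ℍˣ) :
    lift hv g = 1 := by
  have htrace : ∀ᶠ g in 𝓝 1, (lift hw g).trace ≠ 0 := by
    refine (lift hw).continuous_toFun.matrix_trace.continuousAt.eventually_ne ?_
    change (lift hw 1).trace ≠ 0
    simpa using hn
  refine apply_eq_one_of_eventually (ρ := (lift hv).toMonoidHom) (htrace.mono fun g hg => ?_) g
  refine eq_one_of_trace_eq_card (lift_mul_star hv g) ?_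
  rw [Fintype.card_fin]
  exact mul_right_cancel₀ hg (h g)

end Character

section Isotypic

variable {K ι κ : Type*} [CommRing K] [Fintype ι] [Fintype κ] [DecidableEq κ]
  {N : Matrix κ κ K →ₙₐ[K] Matrix ι ι K} {X : Matrix ι κ K}

variable (N X) in
/-- The coefficients of `X` in its expansion along the matrix units on the right; they intertwine
`N` with left multiplication on `K ^ κ`. -/
def coefficient (a b : κ) : Matrix ι κ K :=
  ∑ c, N (Matrix.single c a 1) * X * Matrix.single b c (1 : K)

lemma mul_coefficient {u : Matrix ι ι K} {y : Matrix κ κ K} (h : u * N 1 = N y) (a b : κ) :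
    u * coefficient N X a b = coefficient N X a b * y := by
  have hleft (c : κ) : u * N (Matrix.single c a 1) = ∑ e, y e c • N (Matrix.single e a 1) := by
    rw [← one_mul (Matrix.single c a 1), map_mul, ← mul_assoc, h, ← map_mul]
    simp_rw [← map_smul, ← map_sum]
    congr 1
    ext i j
    simp [Matrix.mul_apply, Matrix.single_apply, Matrix.sum_apply, ite_and]
  have hright (c : κ) : Matrix.single b c 1 * y = ∑ e, y c e • Matrix.single b e (1 : K) := by
    ext i j
    simp [Matrix.mul_apply, Matrix.single_apply, Matrix.sum_apply, ite_and]
  simp only [coefficient, Matrix.mul_sum, Matrix.sum_mul, ← Matrix.mul_assoc, hleft]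
  simp only [Matrix.mul_assoc, hright, Matrix.mul_sum, Matrix.smul_mul, Matrix.mul_smul]
  exact Finset.sum_comm

lemma sum_coefficient_mul_single (hX : N 1 * X = X) :
    ∑ p : κ × κ, coefficient N X p.1 p.2 * Matrix.single p.1 p.2 (1 : K) = X := by
  have hterm (a b : κ) : coefficient N X a b * Matrix.single a b (1 : K)
      = N (Matrix.single a a 1) * X * Matrix.single b b (1 : K) := by
    rw [coefficient, Matrix.sum_mul, Finset.sum_eq_single_of_mem a (Finset.mem_univ a)]
    · rw [Matrix.mul_assoc, Matrix.single_mul_single_same, one_mul]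
    · intro c _ hc
      rw [Matrix.mul_assoc, Matrix.single_mul_single_of_ne _ _ _ _ hc, Matrix.mul_zero]
  simp only [Fintype.sum_prod_type, hterm, ← Matrix.mul_sum, ← Matrix.sum_mul,
    Matrix.sum_single_one, Matrix.mul_one, ← map_sum, hX]

end Isotypic

section Block

variable {ι κ : Type*}

/-- The block column with entries `x i`. -/
def blockCol (x : ι → Matrix κ κ ℂ) : Matrix (ι × κ) κ ℂ :=
  Matrix.of fun p b => x p.1 p.2 b

lemma blockCol_bijective : Function.Bijective (blockCol : (ι → Matrix κ κ ℂ) → _) :=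
  ⟨fun _ _ h => funext fun i => Matrix.ext fun a b => congrFun₂ h (i, a) b,
    fun D => ⟨fun i => Matrix.of fun a b => D (i, a) b, rfl⟩⟩

lemma kronecker_eq_comp (P : Matrix ι ι ℂ) (Q : Matrix κ κ ℂ) :
    P ⊗ₖ Q = Matrix.comp ι ι κ κ ℂ (Matrix.of fun i j => P i j • Q) := rfl

variable [Fintype κ]

lemma blockCol_mul (x : ι → Matrix κ κ ℂ) (f : Matrix κ κ ℂ) :
    blockCol x * f = blockCol fun i => x i * f := by
  ext ⟨i, a⟩ b
  simp [blockCol, Matrix.mul_apply]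

variable [Fintype ι]

lemma comp_mul_blockCol (A : Matrix ι ι (Matrix κ κ ℂ)) (x : ι → Matrix κ κ ℂ) :
    Matrix.comp ι ι κ κ ℂ A * blockCol x = blockCol fun i => ∑ j, A i j * x j := by
  ext ⟨i, a⟩ b
  simp [blockCol, Matrix.mul_apply, Fintype.sum_prod_type, Matrix.sum_apply]

lemma kronecker_mul_blockCol (P : Matrix ι ι ℂ) (Q : Matrix κ κ ℂ) (x : ι → Matrix κ κ ℂ) :
    (P ⊗ₖ Q) * blockCol x = blockCol fun i => ∑ j, P i j • (Q * x j) := by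
  simp only [kronecker_eq_comp, comp_mul_blockCol, Matrix.of_apply, smul_mul_assoc]

lemma kronecker_mul_comp_mul_star (P : Matrix ι ι ℂ) (Q : Matrix κ κ ℂ)
    (A : Matrix ι ι (Matrix κ κ ℂ)) :
    (P ⊗ₖ Q) * Matrix.comp ι ι κ κ ℂ A * (star P ⊗ₖ star Q) = Matrix.comp ι ι κ κ ℂ
      (Matrix.of fun i j => ∑ p, ∑ q, (P i p * star (P j q)) • (Q * A p q * star Q)) := by
  simp only [kronecker_eq_comp, ← Matrix.compRingEquiv_apply, ← map_mul]
  congr 1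
  ext1 i j
  simp only [Matrix.mul_apply, Matrix.of_apply, Matrix.star_apply, Finset.sum_mul, smul_mul_assoc,
    mul_smul_comm]
  rw [Finset.sum_comm]
  simp only [Finset.smul_sum, smul_smul, mul_comm]

lemma conj_star_eq_sum_of_kronecker_mul_blockCol [DecidableEq ι] [DecidableEq κ]
    {V : Matrix ι ι ℂ} {W : Matrix κ κ ℂ} (hV : V * star V = 1) (hW : W * star W = 1)
    {d : ι → Matrix κ κ ℂ} (hd : (V ⊗ₖ W) * blockCol d = blockCol d * W) (j : ι) :
    W * star (d j) * star W = ∑ i, V i j • star (d i) := by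
  have hcol : ((1 : Matrix ι ι ℂ) ⊗ₖ W) * blockCol d =
      (star V ⊗ₖ (1 : Matrix κ κ ℂ)) * (blockCol d * W) := by
    rw [← hd, ← Matrix.mul_assoc, ← Matrix.mul_kronecker_mul, mul_eq_one_comm.1 hV, one_mul]
  rw [blockCol_mul, kronecker_mul_blockCol, kronecker_mul_blockCol] at hcol
  have hj : W * d j = ∑ i, star (V i j) • (d i * W) := by
    simpa [Matrix.one_apply, Matrix.star_apply] using congrFun (blockCol_bijective.1 hcol) j
  rw [mul_assoc, ← star_mul, hj]
  simp only [star_sum, StarModule.star_smul, star_star, star_mul, Finset.mul_sum, mul_smul_comm,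
    ← mul_assoc, hW, one_mul]

end Block

section FullStructure

variable {β} {m : ℕ} {v : SU2 → Fin m → Fin m → ℂ} {E : Fin m → Fin m → F}
  {η : F → Fin m → Fin m → F}

lemma of_map_one (h : IsFullStructure β v E η) : Matrix.of (η 1) = Matrix.of E := by
  obtain ⟨-, -, -, -, hone, -⟩ := h
  exact Matrix.ext hone

lemma of_map_mul (h : IsFullStructure β v E η) (f g : F) :
    Matrix.of (η (f * g)) = Matrix.of (η f) * Matrix.of (η g) := by
  obtain ⟨-, -, -, -, -, hmul, -⟩ := h
  ext1 i j
  simp only [Matrix.mul_apply, Matrix.of_apply, hmul]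

lemma of_map_smul_add (h : IsFullStructure β v E η) (c : ℂ) (f g : F) :
    Matrix.of (η (c • f + g)) = c • Matrix.of (η f) + Matrix.of (η g) := by
  obtain ⟨-, -, -, -, -, -, -, hlin, -⟩ := h
  exact Matrix.ext (hlin c f g)

lemma of_map_zero (h : IsFullStructure β v E η) : Matrix.of (η 0) = 0 := by
  have hzero := of_map_smul_add h 1 0 0
  rwa [one_smul, one_smul, add_zero, left_eq_add] at hzero

lemma map_apply_eq_sum (h : IsFullStructure β v E η) (k : SU2) (f : F) (i j : Fin m) :
    η (β k f) i j = ∑ p, ∑ q, (v k i p * star (v k j q)) • β k (η f p q) := by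
  obtain ⟨-, -, -, -, -, -, -, -, hequiv, -⟩ := h
  exact hequiv k f i j

lemma sum_map_mul_star (h : IsFullStructure β v E η) (f : F)
    {c : Fin m → F} (hc : ∀ (k : SU2) (j : Fin m), β k (c j) = ∑ i, v k i j • c i) (i : Fin m) :
    ∑ j, η f i j * star (c j) = star (c i) * f := by
  obtain ⟨-, -, -, -, -, -, -, -, -, hZ⟩ := h
  exact hZ f c hc i

end FullStructure

section LeftAction

variable {m n : ℕ} {v : SU2 → Fin m → Fin m → ℂ} {w : SU2 → Fin n → Fin n → ℂ}

/-- The tensor product of `lift hv` and `lift hw`. -/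
noncomputable def tensorLift (hv : RepData v) (hw : RepData w) :
    ℍˣ →* Matrix (Fin m × Fin n) (Fin m × Fin n) ℂ where
  toFun g := lift hv g ⊗ₖ lift hw g
  map_one' := by simp
  map_mul' g h := by rw [map_mul, map_mul, Matrix.mul_kronecker_mul]

/-- `β` is the adjoint action of the representation `w`. -/
def IsAdjointAction (β : SU2 → (Matrix (Fin n) (Fin n) ℂ ≃⋆ₐ[ℂ] Matrix (Fin n) (Fin n) ℂ))
    (w : SU2 → Fin n → Fin n → ℂ) : Prop :=
  ∀ k f, β k f = Matrix.of (w k) * f * star (Matrix.of (w k))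

variable {β : SU2 → (Matrix (Fin n) (Fin n) ℂ ≃⋆ₐ[ℂ] Matrix (Fin n) (Fin n) ℂ)}
  {E : Fin m → Fin m → Matrix (Fin n) (Fin n) ℂ}
  {η : Matrix (Fin n) (Fin n) ℂ → Fin m → Fin m → Matrix (Fin n) (Fin n) ℂ}

/-- The left action `η` as a homomorphism into block matrices; it maps `1` to the block matrix
of `E`. -/
def leftAction (h : IsFullStructure β v E η) :
    Matrix (Fin n) (Fin n) ℂ →ₙₐ[ℂ] Matrix (Fin m × Fin n) (Fin m × Fin n) ℂ where
  toFun f := Matrix.compRingEquiv _ _ ℂ (Matrix.of (η f))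
  map_zero' := by rw [of_map_zero h, map_zero]
  map_smul' c f := by
    rw [← add_zero (c • f), of_map_smul_add h, of_map_zero h, add_zero]
    rfl
  map_add' f g := by
    rw [← map_add, ← one_smul ℂ f, of_map_smul_add h, one_smul, one_smul]
  map_mul' f g := by rw [← map_mul, of_map_mul h]

lemma leftAction_apply (h : IsFullStructure β v E η) (f : Matrix (Fin n) (Fin n) ℂ) :
    leftAction h f = Matrix.comp _ _ _ _ ℂ (Matrix.of (η f)) := rfl

variable (hv : RepData v) (hw : RepData w)

lemma isCovariant_leftAction (hβ : IsAdjointAction β w) (h : IsFullStructure β v E η) :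
    IsCovariant (leftAction h) (tensorLift hv hw) (lift hw : ℍˣ →* Matrix (Fin n) (Fin n) ℂ) := by
  intro g f
  have hstar {l : ℕ} {u : SU2 → Fin l → Fin l → ℂ} (hu : RepData u) :
      star (lift hu g) * lift hu g = 1 := mul_eq_one_comm.1 (lift_mul_star hu g)
  have hconj : leftAction h (lift hw g * f * star (lift hw g)) =
      (lift hv g ⊗ₖ lift hw g) * leftAction h f * (star (lift hv g) ⊗ₖ star (lift hw g)) := by
    rw [leftAction_apply, leftAction_apply, kronecker_mul_comp_mul_star]
    congr 1
    ext1 i j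
    exact (congrFun₂ (congrArg η (hβ (toSU2 g) f)) i j).symm.trans <|
      (map_apply_eq_sum h _ f i j).trans <| by simp only [hβ _ (η f _ _)]; rfl
  change (lift hv g ⊗ₖ lift hw g) * leftAction h f
    = leftAction h (lift hw g * f * lift hw g⁻¹) * (lift hv g ⊗ₖ lift hw g)
  rw [lift_inv, hconj, mul_assoc _ (star _ ⊗ₖ star _), ← Matrix.mul_kronecker_mul, hstar hv,
    hstar hw, Matrix.one_kronecker_one, mul_one]

variable {d : Fin m → Matrix (Fin n) (Fin n) ℂ}

lemma apply_star_eq_sum (hβ : IsAdjointAction β w)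
    (hd : ∀ g, tensorLift hv hw g * blockCol d = blockCol d * lift hw g) (k : SU2) (j : Fin m) :
    β k (star (d j)) = ∑ i, v k i j • star (d i) := by
  obtain ⟨g, rfl⟩ := toSU2_surjective k
  rw [hβ]
  exact conj_star_eq_sum_of_kronecker_mul_blockCol (lift_mul_star hv g) (lift_mul_star hw g)
    (hd g) j

lemma leftAction_mul_blockCol (hβ : IsAdjointAction β w) (h : IsFullStructure β v E η)
    (hd : ∀ g, tensorLift hv hw g * blockCol d = blockCol d * lift hw g)
    (f : Matrix (Fin n) (Fin n) ℂ) : leftAction h f * blockCol d = blockCol d * f := by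
  rw [leftAction_apply, comp_mul_blockCol, blockCol_mul]
  congr 1
  ext1 i
  simpa only [star_star, Matrix.of_apply] using
    sum_map_mul_star h f (apply_star_eq_sum hv hw hβ hd) i

end LeftAction

section Main

variable {n : ℕ} {w : SU2 → Fin n → Fin n → ℂ} {v : SU2 → Fin 3 → Fin 3 → ℂ}
  {β : SU2 → (Matrix (Fin n) (Fin n) ℂ ≃⋆ₐ[ℂ] Matrix (Fin n) (Fin n) ℂ)}
  {E : Fin 3 → Fin 3 → Matrix (Fin n) (Fin n) ℂ}
  {η : Matrix (Fin n) (Fin n) ℂ → Fin 3 → Fin 3 → Matrix (Fin n) (Fin n) ℂ}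

lemma exists_tensorLift_intertwiner (hn : 2 ≤ n) (hv : RepData v) (hv_irr : IsIrr v)
    (hw : RepData w) (hw_irr : IsIrr w) :
    ∃ d : Fin 3 → Matrix (Fin n) (Fin n) ℂ, blockCol d ≠ 0 ∧
      ∀ g, tensorLift hv hw g * blockCol d = blockCol d * lift hw g := by
  have hodd : Odd 3 := by decide
  obtain ⟨P, hPI, hP⟩ := exists_equivariant_of_card_eq_three (Fintype.card_fin 3)
    (lift_realUnit_of_odd hv hv_irr hodd) (lift_unitI_ne_one hv hv_irr hodd (by norm_num))
  obtain ⟨g, hg⟩ := exists_lift_ne_one hw hw_irr hn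
  obtain ⟨Q, hQI, hQ⟩ :=
    exists_equivariant_of_ne_one (W := lift hw) (fun t ht => lift_realUnit_of_pos hw ht) hg
  obtain ⟨C, hC, hUC⟩ := exists_intertwiner hP hQ hPI hQI
  obtain ⟨d, rfl⟩ := blockCol_bijective.2 C
  exact ⟨d, hC, hUC⟩

theorem tensorLift_mul_leftAction_one (hn : 2 ≤ n) (hv : RepData v) (hv_irr : IsIrr v)
    (hw : RepData w) (hw_irr : IsIrr w) (hβ : IsAdjointAction β w)
    (h : IsFullStructure β v E η) (g : ℍˣ) :
    tensorLift hv hw g * leftAction h 1 = leftAction h (lift hw g) := by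
  obtain ⟨d, hd, hUd⟩ := exists_tensorLift_intertwiner hn hv hv_irr hw hw_irr
  refine apply_mul_map_one_eq (isCovariant_leftAction hv hw hβ h)
    (leftAction_mul_blockCol hv hw hβ h hUd) hUd hd (by simp) (fun t => ?_) g
  obtain ⟨ω, hω⟩ := exists_lift_realUnit_eq_smul hw hw_irr t
  refine ⟨ω, ?_, hω⟩
  change lift hv (realUnit t) ⊗ₖ lift hw (realUnit t) = _
  rw [lift_realUnit_of_odd hv hv_irr (by decide), hω, Matrix.kronecker_smul,
    Matrix.one_kronecker_one]

-- With `E = 1`, taking traces gives `χ_v χ_w = 3 χ_w`, so `χ_v = 3` near the identity.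
theorem not_isFullStructure_one (hn : 2 ≤ n) (hv : RepData v) (hv_irr : IsIrr v)
    (hw : RepData w) (hw_irr : IsIrr w) (hβ : IsAdjointAction β w) :
    ¬ IsFullStructure β v (fun i j => if i = j then 1 else 0) η := by
  intro h
  have hone : leftAction h 1 = 1 := by
    rw [leftAction_apply, of_map_one h, ← Matrix.comp_one]
    rfl
  have htrace (g : ℍˣ) :
      (lift hv g).trace * (lift hw g).trace = (3 : ℕ) * (lift hw g).trace := by
    have hn0 : (n : ℂ) ≠ 0 := by exact_mod_cast (by omega : n ≠ 0)
    have hcard := card_mul_trace_map (leftAction h) (lift hw g)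
    rw [← tensorLift_mul_leftAction_one hn hv hv_irr hw hw_irr hβ, hone, mul_one] at hcard
    refine mul_left_cancel₀ hn0 ?_
    have htensor : (tensorLift hv hw g).trace = (lift hv g).trace * (lift hw g).trace :=
      Matrix.trace_kronecker _ _
    rw [htensor, Matrix.trace_one] at hcard
    simp only [Fintype.card_prod, Fintype.card_fin, Nat.cast_mul] at hcard
    linear_combination hcard
  exact lift_unitI_ne_one hv hv_irr (by decide) (by norm_num)
    (lift_eq_one_of_trace_mul_trace hv hw (by omega) htrace unitI)

theorem exists_eq_sum_star_mul (hn : 2 ≤ n) (hv : RepData v) (hv_irr : IsIrr v)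
    (hw : RepData w) (hw_irr : IsIrr w) (hβ : IsAdjointAction β w)
    (h : IsFullStructure β v E η) {x : Fin 3 → Matrix (Fin n) (Fin n) ℂ}
    (hx : ∀ i, ∑ j, E i j * x j = x i) :
    ∃ (N : ℕ) (c : Fin N → Fin 3 → Matrix (Fin n) (Fin n) ℂ) (y : Fin N → Matrix (Fin n) (Fin n) ℂ),
      (∀ a k j, β k (c a j) = ∑ i, v k i j • c a i) ∧ ∀ i, x i = ∑ a, star (c a i) * y a := by
  have hX : leftAction h 1 * blockCol x = blockCol x := by
    rw [leftAction_apply, of_map_one h, comp_mul_blockCol]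
    exact congrArg blockCol (funext hx)
  choose d hd using fun p : Fin n × Fin n =>
    blockCol_bijective.2 (coefficient (leftAction h) (blockCol x) p.1 p.2)
  let e := (Fintype.equivFin (Fin n × Fin n)).symm
  refine ⟨_, fun a i => star (d (e a) i), fun a => Matrix.single (e a).1 (e a).2 1,
    fun a => apply_star_eq_sum hv hw hβ fun g => ?_, fun i => ?_⟩
  · rw [hd]
    exact mul_coefficient (tensorLift_mul_leftAction_one hn hv hv_irr hw hw_irr hβ h g) _ _
  · have hsum := sum_coefficient_mul_single hX
    simp only [← hd, blockCol_mul] at hsum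
    rw [← e.sum_comp] at hsum
    ext a b
    simpa [blockCol, Matrix.sum_apply] using (congrFun₂ hsum (i, a) b).symm

end Main

end SU2Rep

/-- Let `r ≥ 1`, let `w` be an irreducible continuous unitary representation of `SU(2)` of
dimension `r + 1` and let `β_r = Ad ∘ w` be the adjoint action of `SU(2)` on
`F = Mat_{r+1}(ℂ)`.  Let `v` be any irreducible continuous unitary representation of
`SU(2)` of dimension `3`.  Then there is no unital *-homomorphism `η : F → L(Hv) ⊗ F` with
`η (β_k f) = (Ad v(k) ⊗ β_k)(η f)` and `η(f) Z_v = Z_v (1 ⊗ f)` — that is, `v ⊗ β_r`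
admits no structure of a full Hilbert bimodule representation of `SU(2)` — and `X_v` admits
no proper extension to a full bimodule representation: the range of the projection `E` of
any full structure is contained in `X_v`. -/
theorem stmt_17 (r : ℕ) (hr : 1 ≤ r)
    (w : SU2 → Fin (r + 1) → Fin (r + 1) → ℂ)
    (hw : RepData w) (hw_irr : IsIrr w)
    (βr : SU2 → (Matrix (Fin (r + 1)) (Fin (r + 1)) ℂ ≃⋆ₐ[ℂ] Matrix (Fin (r + 1)) (Fin (r + 1)) ℂ))
    (hβr : ∀ (k : SU2) (f : Matrix (Fin (r + 1)) (Fin (r + 1)) ℂ),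
      βr k f = Matrix.of (fun i j => w k i j) * f * star (Matrix.of (fun i j => w k i j)))
    (v : SU2 → Fin 3 → Fin 3 → ℂ)
    (hv : RepData v) (hv_irr : IsIrr v) :
    -- no full bimodule structure on all of Hv ⊗ F
    (¬ ∃ η : Matrix (Fin (r + 1)) (Fin (r + 1)) ℂ →
          Fin 3 → Fin 3 → Matrix (Fin (r + 1)) (Fin (r + 1)) ℂ,
        IsFullStructure βr v
          (fun i j => if i = j then (1 : Matrix (Fin (r + 1)) (Fin (r + 1)) ℂ) else 0) η) ∧
    -- X_v admits no proper extension: the range of E is contained in X_v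
    (∀ (E : Fin 3 → Fin 3 → Matrix (Fin (r + 1)) (Fin (r + 1)) ℂ)
       (η : Matrix (Fin (r + 1)) (Fin (r + 1)) ℂ →
          Fin 3 → Fin 3 → Matrix (Fin (r + 1)) (Fin (r + 1)) ℂ),
      IsFullStructure βr v E η →
      ∀ x : Fin 3 → Matrix (Fin (r + 1)) (Fin (r + 1)) ℂ,
        (∀ i, (∑ j, E i j * x j) = x i) →
        ∃ (n : ℕ) (c : Fin n → Fin 3 → Matrix (Fin (r + 1)) (Fin (r + 1)) ℂ)
          (y : Fin n → Matrix (Fin (r + 1)) (Fin (r + 1)) ℂ),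
          (∀ (a : Fin n) (k : SU2) (j : Fin 3), βr k (c a j) = ∑ i, v k i j • c a i) ∧
          (∀ i, x i = ∑ a, star (c a i) * y a)) := by
  have hn : 2 ≤ r + 1 := by omega
  have hadj : SU2Rep.IsAdjointAction βr w := hβr
  refine ⟨?_, fun E η h x hx => ?_⟩
  · rintro ⟨η, h⟩
    exact SU2Rep.not_isFullStructure_one hn hv hv_irr hw hw_irr hadj h
  · exact SU2Rep.exists_eq_sum_star_mul hn hv hv_irr hw hw_irr hadj h hx

end
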